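/- arXiv:math/9912177 — 2 statements merged into one kernel-verified Lean document; each statement's English description precedes it below -/
import Mathlib

section
/- Let B = B(0,1) be the open unit ball in Euclidean ℝ³ and fix ε ∈ (0, 1/2). Let u be C² on a neighborhood of the closed unit ball with u ≥ 0 on B, and set f = Δu. Then there is a constant C = C(ε), independent of u, such that ∫_B u ≤ C·( ∫_B |f| + ∫_{B(0,ε)} u + u_av(ε) ), where u_av(ε) denotes the mean value of u over the sphere of radius ε about 0, taken with respect to two-dimensional surface (Hausdorff) measure. -/
open MeasureTheory Metric

/-- The Euclidean Laplacian of `u : ℝ³ → ℝ`, as the sum of the pure second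
partial derivatives in the coordinate directions. -/
noncomputable def lap (u : EuclideanSpace ℝ (Fin 3) → ℝ)
    (x : EuclideanSpace ℝ (Fin 3)) : ℝ :=
  ∑ i : Fin 3,
    fderiv ℝ (fun y => fderiv ℝ u y (EuclideanSpace.single i (1 : ℝ))) x
      (EuclideanSpace.single i (1 : ℝ))

/-!
Write `n` for the dimension and `m(r)` for the integral of `u (r • θ)` over the unit sphere.
The radial function `η` with `η'(r) = r ^ (1 - n)` for `ε < r < b` and `η' = 0` elsewhere,
normalized by `η(b) = 0`, is Lipschitz, so integrating by parts against `Δu` gives no boundary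
terms: `-∫ η(‖x‖) Δu = ∫ η'(‖x‖) ∂ᵣu`. In polar coordinates the weight `r ^ (1 - n)` cancels the
Jacobian, and the right-hand side is `m(b) - m(ε)`. As `η` is bounded on the ball of radius `b` and
vanishes outside of it, `m(b) ≤ m(ε) + C ∫ |Δu|`, and integrating in `b` controls `u` on the shell
beyond the radius `ε`.

The mean in the estimate is taken with respect to Hausdorff measure, whereas polar coordinates
produce the cone measure of the sphere. Both are invariant under isometries, hence give the same
mass to all balls of a given radius, and by Christensen's argument two finite measures with this
property are proportional.
-/

open Set Module Laplacian InnerProductSpace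
open scoped NNReal ENNReal Topology

section Laplacian

variable {ι E F : Type*} [Fintype ι] [NormedAddCommGroup E] [InnerProductSpace ℝ E]
  [FiniteDimensional ℝ E] [NormedAddCommGroup F] [NormedSpace ℝ F]

theorem laplacian_eq_sum_fderiv_fderiv (b : OrthonormalBasis ι ℝ E) {f : E → F} {x : E}
    (hf : ContDiffAt ℝ 2 f x) :
    Δ f x = ∑ i, fderiv ℝ (fun y => fderiv ℝ f y (b i)) x (b i) := by
  have hdiff : DifferentiableAt ℝ (fderiv ℝ f) x :=
    (hf.fderiv_right (m := 1) (by norm_num)).differentiableAt one_ne_zero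
  simp [laplacian_eq_iteratedFDeriv_orthonormalBasis f b, iteratedFDeriv_two_apply,
    fderiv_clm_apply hdiff (differentiableAt_const _)]

theorem continuous_laplacian {f : E → F} (hf : ContDiff ℝ 2 f) : Continuous (Δ f) := by
  rw [laplacian_eq_iteratedFDeriv_stdOrthonormalBasis]
  exact continuous_finsetSum _ fun i _ =>
    (hf.continuous_iteratedFDeriv le_rfl).eval_const _

theorem lap_eq_laplacian {u : EuclideanSpace ℝ (Fin 3) → ℝ} {x : EuclideanSpace ℝ (Fin 3)}
    (hu : ContDiffAt ℝ 2 u x) : lap u x = Δ u x := by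
  simp [lap, laplacian_eq_sum_fderiv_fderiv (EuclideanSpace.basisFun (Fin 3) ℝ) hu]

end Laplacian

section Average

variable {α F : Type*} [MeasurableSpace α] [NormedAddCommGroup F] [NormedSpace ℝ F]

theorem average_smul_measure {μ : Measure α} {c : ℝ≥0∞} (hc₀ : c ≠ 0) (hc : c ≠ ∞) (f : α → F) :
    ⨍ x, f x ∂(c • μ) = ⨍ x, f x ∂μ := by
  rw [average_eq', average_eq', Measure.smul_apply, smul_smul, smul_eq_mul,
    ENNReal.mul_inv (.inl hc₀) (.inl hc), mul_right_comm, ENNReal.inv_mul_cancel hc₀ hc, one_mul]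

theorem average_map_measurableEmbedding {β : Type*} [MeasurableSpace β] {μ : Measure α} {g : α → β}
    (hg : MeasurableEmbedding g) (f : β → F) : ⨍ y, f y ∂(μ.map g) = ⨍ x, f (g x) ∂μ := by
  rw [average_eq, average_eq, hg.integral_map, map_measureReal_apply hg.measurable .univ,
    preimage_univ]

end Average

section UniformlyDistributed

variable {X : Type*} [MetricSpace X] [MeasurableSpace X]

/-- A measure is *uniformly distributed* if all balls of a given radius have the same measure.
Unlike the usual convention, balls may be null or of infinite measure. -/
def IsUniformlyDistributed (μ : Measure X) : Prop :=
  ∀ x y r, μ (ball x r) = μ (ball y r)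

variable {μ ν : Measure X}

theorem IsUniformlyDistributed.measure_ball_ne_zero [SecondCountableTopology X]
    (hν : IsUniformlyDistributed ν) (hν₀ : ν ≠ 0) (x : X) {r : ℝ} (hr : 0 < r) :
    ν (ball x r) ≠ 0 := fun h =>
  hν₀ <| Measure.measure_univ_eq_zero.1 <| measure_null_of_locally_null _ fun y _ =>
    ⟨ball y r, mem_nhdsWithin_of_mem_nhds (ball_mem_nhds y hr), hν y x r ▸ h⟩

variable [BorelSpace X] [SecondCountableTopology X]

theorem lintegral_measure_inter_ball [SFinite μ] [SFinite ν] {s : Set X} (hs : MeasurableSet s)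
    (r : ℝ) : ∫⁻ x, ν (s ∩ ball x r) ∂μ = ∫⁻ y in s, μ (ball y r) ∂ν := by
  let D : Set (X × X) := Prod.snd ⁻¹' s ∩ {p | dist p.2 p.1 < r}
  have hD : MeasurableSet D :=
    (measurable_snd hs).inter (measurableSet_lt (by fun_prop) measurable_const)
  calc ∫⁻ x, ν (s ∩ ball x r) ∂μ = μ.prod ν D := (Measure.prod_apply hD).symm
    _ = ∫⁻ y, s.indicator (fun y => μ (ball y r)) y ∂ν := by
        rw [Measure.prod_apply_symm hD]
        refine lintegral_congr fun y => ?_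
        by_cases hy : y ∈ s <;> simp [D, hy, ball, dist_comm y, preimage]
    _ = ∫⁻ y in s, μ (ball y r) ∂ν := lintegral_indicator hs _

namespace IsUniformlyDistributed

variable [IsFiniteMeasure μ] [IsFiniteMeasure ν]

theorem measure_mul_measure_univ_le_of_subset (hμ : IsUniformlyDistributed μ)
    (hν : IsUniformlyDistributed ν) {K U : Set X} (hK : IsCompact K) (hU : IsOpen U)
    (hKU : K ⊆ U) : ν univ * μ K ≤ μ univ * ν U := by
  rcases eq_or_ne ν 0 with rfl | hν₀
  · simp
  rcases isEmpty_or_nonempty X with _ | ⟨⟨a⟩⟩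
  · simp [Subsingleton.elim μ 0]
  obtain ⟨r, hr, hrU⟩ := hK.exists_thickening_subset_open hU hKU
  have hball : ν (ball a r) * μ univ = μ (ball a r) * ν univ := by
    simpa [hμ _ a r, hν _ a r] using
      lintegral_measure_inter_ball (μ := μ) (ν := ν) MeasurableSet.univ r
  have hKball : ν (ball a r) * μ K ≤ μ (ball a r) * ν U := calc
    ν (ball a r) * μ K = ∫⁻ x in K, ν (U ∩ ball x r) ∂μ := by
        rw [← setLIntegral_const]
        refine setLIntegral_congr_fun hK.measurableSet fun x hx => ?_
        rw [inter_eq_self_of_subset_right ((ball_subset_thickening hx r).trans hrU), hν x a]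
    _ ≤ ∫⁻ x, ν (U ∩ ball x r) ∂μ := setLIntegral_le_lintegral _ _
    _ = μ (ball a r) * ν U := by
        simp [lintegral_measure_inter_ball hU.measurableSet, hμ _ a r]
  refine (ENNReal.mul_le_mul_iff_right (hν.measure_ball_ne_zero hν₀ a hr)
    (measure_ne_top ν (ball a r))).1 ?_
  calc ν (ball a r) * (ν univ * μ K) = ν univ * (ν (ball a r) * μ K) := by ring
    _ ≤ ν univ * (μ (ball a r) * ν U) := by gcongr
    _ = ν (ball a r) * μ univ * ν U := by rw [hball]; ring
    _ = ν (ball a r) * (μ univ * ν U) := mul_assoc _ _ _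

theorem smul_eq_smul [CompleteSpace X] (hμ : IsUniformlyDistributed μ)
    (hν : IsUniformlyDistributed ν) : ν univ • μ = μ univ • ν := by
  have key {μ ν : Measure X} [IsFiniteMeasure μ] [IsFiniteMeasure ν]
      (hμ : IsUniformlyDistributed μ) (hν : IsUniformlyDistributed ν) {U : Set X}
      (hU : IsOpen U) : ν univ * μ U ≤ μ univ * ν U := by
    rw [hU.measure_eq_iSup_isCompact, ENNReal.mul_iSup]
    simp only [ENNReal.mul_iSup, iSup_le_iff]
    exact fun K hKU hK => hμ.measure_mul_measure_univ_le_of_subset hν hK hU hKU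
  have := Measure.OuterRegular.smul μ (measure_ne_top ν univ)
  have := Measure.OuterRegular.smul ν (measure_ne_top μ univ)
  refine Measure.OuterRegular.ext_isOpen fun U hU => ?_
  simpa using (key hμ hν hU).antisymm (key hν hμ hU)

theorem average_eq [CompleteSpace X] (hμ : IsUniformlyDistributed μ)
    (hν : IsUniformlyDistributed ν) (hμ₀ : μ ≠ 0) (hν₀ : ν ≠ 0) {F : Type*}
    [NormedAddCommGroup F] [NormedSpace ℝ F] (f : X → F) : ⨍ x, f x ∂μ = ⨍ x, f x ∂ν := by
  rw [← average_smul_measure (Measure.measure_univ_ne_zero.2 hν₀) (measure_ne_top ν univ),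
    hμ.smul_eq_smul hν,
    average_smul_measure (Measure.measure_univ_ne_zero.2 hμ₀) (measure_ne_top μ univ)]

end IsUniformlyDistributed

end UniformlyDistributed

section SphereMeasure

variable {E : Type*} [NormedAddCommGroup E] [InnerProductSpace ℝ E]

theorem exists_linearIsometryEquiv_apply_eq {x y : E} (h : ‖x‖ = ‖y‖) :
    ∃ L : E ≃ₗᵢ[ℝ] E, L x = y :=
  ⟨(ℝ ∙ (x - y))ᗮ.reflection, Submodule.reflection_sub h⟩

theorem image_image_coe_ball_sphere (L : E ≃ₗᵢ[ℝ] E) {x y : sphere (0 : E) 1}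
    (h : L x = y) (r : ℝ) : L '' ((↑) '' ball x r) = ((↑) '' ball y r : Set E) := by
  rw [Subtype.image_ball, Subtype.image_ball, image_inter L.injective, L.image_ball, h]
  change ball y.1 r ∩ L '' sphere 0 1 = ball y.1 r ∩ sphere 0 1
  simp

theorem closedBall_subset_image_orthogonalProjectionOnto_sphere {v : E} (hv : ‖v‖ = 1) :
    closedBall 0 1 ⊆ (ℝ ∙ v)ᗮ.orthogonalProjectionOnto '' sphere (0 : E) 1 := by
  intro y hy
  have hy' : ‖(y : E)‖ ^ 2 ≤ 1 := by
    rw [mem_closedBall_zero_iff] at hy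
    exact pow_le_one₀ (norm_nonneg _) hy
  have horth : inner ℝ (y : E) (√(1 - ‖(y : E)‖ ^ 2) • v) = 0 := by
    rw [inner_smul_right, Submodule.mem_orthogonal_singleton_iff_inner_left.1 y.2, mul_zero]
  refine ⟨y + √(1 - ‖(y : E)‖ ^ 2) • v, ?_, ?_⟩
  · rw [mem_sphere_zero_iff_norm, ← sq_eq_sq₀ (norm_nonneg _) zero_le_one, sq,
      norm_add_sq_eq_norm_sq_add_norm_sq_of_inner_eq_zero _ _ horth, norm_smul, hv, mul_one,
      Real.norm_eq_abs, abs_mul_abs_self, Real.mul_self_sqrt (by linarith)]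
    ring
  · have hv_proj : (ℝ ∙ v)ᗮ.orthogonalProjectionOnto v = 0 := by simp
    rw [map_add, map_smul, hv_proj, smul_zero, add_zero,
      Submodule.orthogonalProjectionOnto_mem_subspace_eq_self]

theorem isUniformlyDistributed_hausdorffMeasure_sphere [MeasurableSpace E] [BorelSpace E] {d : ℝ}
    (hd : 0 ≤ d) : IsUniformlyDistributed (μH[d] : Measure (sphere (0 : E) 1)) := by
  intro x y r
  obtain ⟨L, hL⟩ := exists_linearIsometryEquiv_apply_eq (x := (x : E)) (y := y) (by simp)
  have hcoe : Isometry ((↑) : sphere (0 : E) 1 → E) := isometry_subtype_coe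
  rw [← hcoe.hausdorffMeasure_image (.inl hd), ← hcoe.hausdorffMeasure_image (.inl hd),
    ← image_image_coe_ball_sphere L hL, L.isometry.hausdorffMeasure_image (.inl hd)]

variable [FiniteDimensional ℝ E]

theorem finrank_orthogonal_span_singleton_eq_sub_one {v : E} (hv : v ≠ 0) :
    finrank ℝ (ℝ ∙ v)ᗮ = finrank ℝ E - 1 := by
  have := nontrivial_of_ne v 0 hv
  have : Fact (finrank ℝ E = finrank ℝ E - 1 + 1) :=
    ⟨(Nat.sub_add_cancel finrank_pos).symm⟩
  exact Submodule.finrank_orthogonal_span_singleton hv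

theorem hausdorffMeasure_image_lt_top {F X : Type*} [NormedAddCommGroup F] [NormedSpace ℝ F]
    [FiniteDimensional ℝ F] [MetricSpace X] [MeasurableSpace X] [BorelSpace X] {f : F → X}
    (hf : LocallyLipschitz f) {K : Set F} (hK : IsCompact K) :
    μH[finrank ℝ F] (f '' K) < ∞ := by
  borelize F
  obtain ⟨C, hC⟩ := hf.locallyLipschitzOn.exists_lipschitzOnWith_of_compact hK
  refine (hC.hausdorffMeasure_image_le (Nat.cast_nonneg _)).trans_lt ?_
  exact ENNReal.mul_lt_top (by simp) hK.measure_lt_top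

variable [MeasurableSpace E] [BorelSpace E]

open scoped Pointwise in
theorem isUniformlyDistributed_toSphere :
    IsUniformlyDistributed (volume : Measure E).toSphere := by
  intro x y r
  obtain ⟨L, hL⟩ := exists_linearIsometryEquiv_apply_eq (x := (x : E)) (y := y) (by simp)
  have himage : Ioo (0 : ℝ) 1 • L '' ((↑) '' ball x r) =
      L '' (Ioo (0 : ℝ) 1 • (↑) '' ball x r : Set E) :=
    (image_image2_distrib_right fun t z => map_smul L t z).symm
  rw [Measure.toSphere_apply' _ measurableSet_ball, Measure.toSphere_apply' _ measurableSet_ball,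
    ← image_image_coe_ball_sphere L hL, himage, L.image_eq_preimage_symm,
    L.symm.measurePreserving.measure_preimage_emb L.symm.toHomeomorph.measurableEmbedding]

instance isFiniteMeasure_hausdorffMeasure_sphere :
    IsFiniteMeasure (μH[(finrank ℝ E - 1 : ℕ)] : Measure (sphere (0 : E) 1)) := by
  suffices IsLocallyFiniteMeasure (μH[(finrank ℝ E - 1 : ℕ)] : Measure (sphere (0 : E) 1)) from
    inferInstance
  refine ⟨fun x => ?_⟩
  have hx : ‖((-x : sphere (0 : E) 1) : E)‖ = 1 := norm_eq_of_mem_sphere (-x)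
  let g := (stereographic hx).symm
  have hgx : g 0 = x := by
    rw [← stereographic_neg_apply x]
    exact (stereographic hx).left_inv (ne_neg_of_mem_unit_sphere ℝ x)
  have hg : LocallyLipschitz g :=
    (contDiff_stereoInvFunAux.comp
      (ℝ ∙ ((-x : sphere (0 : E) 1) : E))ᗮ.subtypeL.contDiff).locallyLipschitz
  refine ⟨g '' closedBall 0 1, ?_, ?_⟩
  · have hnhds : g '' closedBall 0 1 ∈ 𝓝 (g 0) :=
      (isOpenEmbedding_stereographic_symm hx).isOpenMap.image_mem_nhds
        (closedBall_mem_nhds 0 one_pos)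
    rwa [hgx] at hnhds
  · rw [← finrank_orthogonal_span_singleton_eq_sub_one (norm_ne_zero_iff.1 (hx ▸ one_ne_zero))]
    exact hausdorffMeasure_image_lt_top hg (isCompact_closedBall 0 1)

theorem hausdorffMeasure_sphere_ne_zero [Nontrivial E] :
    (μH[(finrank ℝ E - 1 : ℕ)] : Measure (sphere (0 : E) 1)) ≠ 0 := by
  obtain ⟨v, hv⟩ := exists_norm_eq E zero_le_one
  rw [← finrank_orthogonal_span_singleton_eq_sub_one (norm_ne_zero_iff.1 (hv ▸ one_ne_zero))]
  let P : sphere (0 : E) 1 → (ℝ ∙ v)ᗮ := fun x => (ℝ ∙ v)ᗮ.orthogonalProjectionOnto x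
  have hP : LipschitzWith 1 P := by
    have := (ℝ ∙ v)ᗮ.lipschitzWith_orthogonalProjectionOnto.comp
      (LipschitzWith.subtype_val (sphere 0 1))
    rwa [one_mul] at this
  intro h
  have hle := hP.hausdorffMeasure_image_le (Nat.cast_nonneg (finrank ℝ (ℝ ∙ v)ᗮ)) univ
  have hpos : 0 < μH[finrank ℝ (ℝ ∙ v)ᗮ] (closedBall (0 : (ℝ ∙ v)ᗮ) 1) :=
    measure_closedBall_pos _ _ one_pos
  refine hpos.not_ge ((measure_mono ?_).trans (hle.trans_eq (by simp [h])))
  rw [image_univ, ← image_eq_range]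
  exact closedBall_subset_image_orthogonalProjectionOnto_sphere hv

end SphereMeasure

section SphereAverage

theorem map_smul_coe_hausdorffMeasure_sphere {E : Type*} [NormedAddCommGroup E] [NormedSpace ℝ E]
    [MeasurableSpace E] [BorelSpace E] {d : ℝ} (hd : 0 ≤ d) {r : ℝ} (hr : 0 < r) :
    μH[d].map (fun θ : sphere (0 : E) 1 => r • θ.1) =
      ‖r‖₊⁻¹ ^ d • μH[d].restrict (sphere 0 r) := by
  have hcoe : Isometry ((↑) : sphere (0 : E) 1 → E) := isometry_subtype_coe
  have hpre : (r • ·) ⁻¹' sphere (0 : E) r = sphere 0 1 := by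
    ext x
    simp [norm_smul, abs_of_pos hr, hr.ne']
  have hmap : (μH[d] : Measure E).map (r • ·) = ‖r‖₊⁻¹ ^ d • μH[d] := by
    have h := map_homothety_hausdorffMeasure hd (0 : E) hr.ne'
    simpa [AffineMap.coe_homothety, Function.comp_def] using h
  rw [← Function.comp_def (r • ·),
    ← Measure.map_map (measurable_const_smul r) measurable_subtype_coe,
    hcoe.map_hausdorffMeasure (.inl hd), Subtype.range_coe, ← hpre,
    ← Measure.restrict_map (measurable_const_smul r) isClosed_sphere.measurableSet, hmap,
    Measure.restrict_smul]

theorem setAverage_sphere_hausdorffMeasure {E : Type*} [NormedAddCommGroup E]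
    [InnerProductSpace ℝ E] [FiniteDimensional ℝ E] [Nontrivial E] [MeasurableSpace E]
    [BorelSpace E] {F : Type*} [NormedAddCommGroup F] [NormedSpace ℝ F] (f : E → F) {r : ℝ}
    (hr : 0 < r) :
    ⨍ x in sphere 0 r, f x ∂μH[(finrank ℝ E - 1 : ℕ)] =
      ⨍ θ : sphere (0 : E) 1, f (r • θ.1) ∂(volume : Measure E).toSphere := by
  have hd : (0 : ℝ) ≤ (finrank ℝ E - 1 : ℕ) := Nat.cast_nonneg _
  have hemb : MeasurableEmbedding fun θ : sphere (0 : E) 1 => r • (θ : E) :=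
    (measurableEmbedding_const_smul₀ hr.ne').comp (.subtype_coe isClosed_sphere.measurableSet)
  rw [isUniformlyDistributed_toSphere.average_eq (isUniformlyDistributed_hausdorffMeasure_sphere hd)
    (Measure.toSphere_ne_zero _) hausdorffMeasure_sphere_ne_zero,
    ← average_map_measurableEmbedding hemb, map_smul_coe_hausdorffMeasure_sphere hd hr]
  have hc : ‖r‖₊⁻¹ ^ ((finrank ℝ E - 1 : ℕ) : ℝ) ≠ 0 :=
    (NNReal.rpow_pos (by simpa using hr.ne')).ne'
  exact (average_smul_measure (ENNReal.coe_ne_zero.2 hc) ENNReal.coe_ne_top f).symm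

end SphereAverage

section Polar

theorem comp_homeomorphUnitSphereProd {E F : Type*} [NormedAddCommGroup E]
    [NormedSpace ℝ E] (f : E → F) :
    (fun p : sphere (0 : E) 1 × Ioi (0 : ℝ) => f (p.2.1 • p.1.1)) ∘ homeomorphUnitSphereProd E =
      f ∘ (↑) := by
  ext x
  have hx : ‖(x : E)‖ ≠ 0 := norm_ne_zero_iff.2 x.2
  simp [smul_smul, hx]

variable {E F : Type*} [NormedAddCommGroup E] [NormedSpace ℝ E] [FiniteDimensional ℝ E]
  [MeasurableSpace E] [BorelSpace E] [NormedAddCommGroup F]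
  {μ : Measure E} [μ.IsAddHaarMeasure] {f : E → F}

theorem integrable_prod_toSphere (hf : Integrable f μ) :
    Integrable (fun p : sphere (0 : E) 1 × Ioi (0 : ℝ) => f (p.2.1 • p.1.1))
      (μ.toSphere.prod (Measure.volumeIoiPow (finrank ℝ E - 1))) := by
  rw [← μ.measurePreserving_homeomorphUnitSphereProd.integrable_comp_emb
    (homeomorphUnitSphereProd E).measurableEmbedding, comp_homeomorphUnitSphereProd,
    ← integrableOn_iff_comap_subtypeVal (measurableSet_singleton 0).compl]
  exact hf.integrableOn

variable [NormedSpace ℝ F]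

theorem integral_volumeIoiPow (n : ℕ) (f : ℝ → F) :
    ∫ r : Ioi (0 : ℝ), f r ∂Measure.volumeIoiPow n = ∫ r in Ioi (0 : ℝ), r ^ n • f r := by
  simp only [Measure.volumeIoiPow, ENNReal.ofReal]
  rw [integral_withDensity_eq_integral_smul (by fun_prop),
    integral_subtype_comap measurableSet_Ioi fun r => Real.toNNReal (r ^ n) • f r]
  refine setIntegral_congr_fun measurableSet_Ioi fun r hr => ?_
  rw [NNReal.smul_def, Real.coe_toNNReal _ (pow_nonneg (le_of_lt hr) n)]

theorem integral_prod_toSphere [Nontrivial E] (f : E → F) :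
    ∫ p : sphere (0 : E) 1 × Ioi (0 : ℝ), f (p.2.1 • p.1.1)
      ∂μ.toSphere.prod (Measure.volumeIoiPow (finrank ℝ E - 1)) = ∫ x, f x ∂μ := by
  rw [← μ.measurePreserving_homeomorphUnitSphereProd.integral_comp
    (homeomorphUnitSphereProd E).measurableEmbedding]
  refine (integral_congr_ae (.of_forall (congrFun (comp_homeomorphUnitSphereProd f)))).trans ?_
  exact (integral_subtype_comap (measurableSet_singleton 0).compl f).trans
    (by rw [restrict_compl_singleton])

theorem integral_eq_integral_toSphere_Ioi [Nontrivial E] (hf : Integrable f μ) :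
    ∫ x, f x ∂μ = ∫ θ : sphere (0 : E) 1,
      (∫ r in Ioi (0 : ℝ), r ^ (finrank ℝ E - 1) • f (r • θ.1)) ∂μ.toSphere := by
  rw [← integral_prod_toSphere, integral_prod _ (integrable_prod_toSphere hf)]
  exact integral_congr_ae (.of_forall fun θ => integral_volumeIoiPow _ fun r => f (r • θ.1))

/-- The integral of `f` over the sphere of radius `r`, parametrized by the unit sphere: it lacks
the factor `r ^ (dim E - 1)` of the surface integral. -/
noncomputable def sphereIntegral (μ : Measure E) (f : E → F) (r : ℝ) : F :=
  ∫ θ : sphere (0 : E) 1, f (r • θ.1) ∂μ.toSphere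

theorem integral_eq_integral_Ioi_sphereIntegral [Nontrivial E] (hf : Integrable f μ) :
    ∫ x, f x ∂μ = ∫ r in Ioi (0 : ℝ), r ^ (finrank ℝ E - 1) • sphereIntegral μ f r := by
  rw [← integral_prod_toSphere, integral_prod_symm _ (integrable_prod_toSphere hf)]
  exact integral_volumeIoiPow _ (sphereIntegral μ f)

theorem setIntegral_norm_preimage [Nontrivial E] {T : Set ℝ} (hT : MeasurableSet T)
    (hT₀ : T ⊆ Ioi 0) (hf : IntegrableOn f (norm ⁻¹' T) μ) :
    ∫ x in norm ⁻¹' T, f x ∂μ = ∫ r in T, r ^ (finrank ℝ E - 1) • sphereIntegral μ f r := by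
  have hT' : MeasurableSet (norm ⁻¹' T : Set E) := measurable_norm hT
  rw [← integral_indicator hT', integral_eq_integral_Ioi_sphereIntegral
    (hf.integrable_indicator hT'), ← inter_eq_self_of_subset_right hT₀,
    ← setIntegral_indicator hT]
  refine setIntegral_congr_fun measurableSet_Ioi fun r hr => ?_
  by_cases hrT : r ∈ T <;>
    simp [sphereIntegral, indicator, norm_smul, abs_of_pos (mem_Ioi.1 hr), hrT,
      inter_eq_self_of_subset_right hT₀]

end Polar

section Green

variable {ι E : Type*} [Fintype ι] [NormedAddCommGroup E] [InnerProductSpace ℝ E]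
  [FiniteDimensional ℝ E] [MeasurableSpace E] [BorelSpace E] {μ : Measure E}
  [μ.IsAddHaarMeasure] {φ w : E → ℝ} {C : ℝ≥0}

theorem integral_lineDeriv_mul_fderiv_apply (hφ : LipschitzWith C φ) (hw : ContDiff ℝ 2 w)
    (hw_supp : HasCompactSupport w) (v : E) :
    ∫ x, lineDeriv ℝ φ x v * fderiv ℝ w x v ∂μ =
      -∫ x, φ x * fderiv ℝ (fun y => fderiv ℝ w y v) x v ∂μ := by
  have hdw : ContDiff ℝ 1 fun x => fderiv ℝ w x v :=
    (hw.fderiv_right (by norm_num)).clm_apply contDiff_const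
  have hdw_supp : HasCompactSupport fun x => fderiv ℝ w x v := hw_supp.fderiv_apply ℝ v
  obtain ⟨D, hD⟩ := hdw.lipschitzWith_of_hasCompactSupport hdw_supp one_ne_zero
  rw [hφ.integral_lineDeriv_mul_eq hD hdw_supp, ← integral_neg]
  refine integral_congr_ae (.of_forall fun x => ?_)
  simp only [((hdw.differentiable one_ne_zero) x).lineDeriv_eq_fderiv, map_neg]
  ring

theorem integral_sum_lineDeriv_mul_fderiv_apply (b : OrthonormalBasis ι ℝ E)
    (hφ : LipschitzWith C φ) (hw : ContDiff ℝ 2 w) (hw_supp : HasCompactSupport w) :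
    ∫ x, ∑ i, lineDeriv ℝ φ x (b i) * fderiv ℝ w x (b i) ∂μ = -∫ x, φ x * Δ w x ∂μ := by
  have hcont (v : E) : Continuous fun x => fderiv ℝ w x v :=
    (hw.continuous_fderiv two_ne_zero).clm_apply continuous_const
  have hcont₂ (v : E) : Continuous fun x => fderiv ℝ (fun y => fderiv ℝ w y v) x v :=
    (((hw.fderiv_right (by norm_num)).clm_apply contDiff_const).continuous_fderiv
      one_ne_zero).clm_apply continuous_const
  have hint (i : ι) : Integrable (fun x => lineDeriv ℝ φ x (b i) * fderiv ℝ w x (b i)) μ :=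
    ((hcont _).integrable_of_hasCompactSupport (hw_supp.fderiv_apply ℝ _)).mul_of_top_right
      (hφ.memLp_lineDeriv (b i))
  have hint₂ (i : ι) :
      Integrable (fun x => φ x * fderiv ℝ (fun y => fderiv ℝ w y (b i)) x (b i)) μ :=
    (hφ.continuous.mul (hcont₂ _)).integrable_of_hasCompactSupport
      ((hw_supp.fderiv_apply ℝ _).fderiv_apply ℝ _).mul_left
  rw [integral_finsetSum _ fun i _ => hint i]
  simp_rw [integral_lineDeriv_mul_fderiv_apply hφ hw hw_supp,
    laplacian_eq_sum_fderiv_fderiv b hw.contDiffAt, Finset.mul_sum]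
  rw [integral_finsetSum _ fun i _ => hint₂ i, Finset.sum_neg_distrib]

end Green

section Radial

variable {E : Type*} [NormedAddCommGroup E] [InnerProductSpace ℝ E]

theorem lineDeriv_comp_norm {h : ℝ → ℝ} {h' : ℝ} {x : E} (hx : x ≠ 0)
    (hh : HasDerivAt h h' ‖x‖) (v : E) :
    lineDeriv ℝ (fun y => h ‖y‖) x v = h' * (inner ℝ x v / ‖x‖) := by
  have hline : HasDerivAt (fun t : ℝ => x + t • v) v 0 := by
    simpa using ((hasDerivAt_id (0 : ℝ)).smul_const v).const_add x
  have hsq : ‖x + (0 : ℝ) • v‖ ^ 2 ≠ 0 := by simpa using hx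
  have hnorm : HasDerivAt (fun t : ℝ => ‖x + t • v‖) (inner ℝ x v / ‖x‖) 0 := by
    have := hline.norm_sq.sqrt hsq
    simp only [Real.sqrt_sq (norm_nonneg _), zero_smul, add_zero] at this
    exact this.congr_deriv (mul_div_mul_left _ _ two_ne_zero)
  exact (HasDerivAt.comp_of_eq 0 hh hnorm (by simp)).deriv

variable [FiniteDimensional ℝ E] [MeasurableSpace E] [BorelSpace E] {μ : Measure E}
  [μ.IsAddHaarMeasure] {w : E → ℝ} {C : ℝ≥0}

theorem ae_norm_notMem_of_countable [Nontrivial E] {s : Set ℝ} (hs : s.Countable) :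
    ∀ᵐ x : E ∂μ, ‖x‖ ∉ s := by
  have hnull : μ (⋃ r ∈ s, sphere (0 : E) r) = 0 :=
    (measure_biUnion_null_iff hs).2 fun r _ => Measure.addHaar_sphere μ 0 r
  filter_upwards [measure_eq_zero_iff_ae_notMem.1 hnull] with x hx hxs
  exact hx (mem_biUnion hxs (mem_sphere_zero_iff_norm.2 rfl))

theorem integral_deriv_mul_fderiv_apply_div_norm [Nontrivial E] {h h' : ℝ → ℝ} {s : Set ℝ}
    (hs : s.Countable) (hh : LipschitzWith C h) (hderiv : ∀ r ∉ s, HasDerivAt h (h' r) r)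
    (hw : ContDiff ℝ 2 w) (hw_supp : HasCompactSupport w) :
    ∫ x, h' ‖x‖ * (fderiv ℝ w x x / ‖x‖) ∂μ = -∫ x, h ‖x‖ * Δ w x ∂μ := by
  let b := stdOrthonormalBasis ℝ E
  have hlip : LipschitzWith C fun x : E => h ‖x‖ := by
    have := hh.comp (lipschitzWith_one_norm (E := E))
    rwa [mul_one] at this
  rw [← integral_sum_lineDeriv_mul_fderiv_apply b hlip hw hw_supp]
  refine integral_congr_ae ?_
  filter_upwards [ae_norm_notMem_of_countable hs, Measure.ae_ne μ 0] with x hxs hx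
  have hsum : ∑ i, inner ℝ x (b i) * fderiv ℝ w x (b i) = fderiv ℝ w x x := calc
    _ = fderiv ℝ w x (∑ i, inner ℝ (b i) x • b i) := by simp [real_inner_comm]
    _ = fderiv ℝ w x x := by rw [b.sum_repr']
  rw [← hsum, Finset.sum_div, Finset.mul_sum]
  refine Finset.sum_congr rfl fun i _ => ?_
  rw [lineDeriv_comp_norm hx (hderiv _ hxs)]
  ring

end Radial

section Barrier

/-- The slope of the radial barrier on the shell between the radii `a` and `b`: in dimension
`k + 1` it is the gradient of the radial harmonic function, cut off outside of the shell. -/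
noncomputable def barrierSlope (k : ℕ) (a b : ℝ) : ℝ → ℝ :=
  (Ioo a b).indicator fun t => (t ^ k)⁻¹

/-- The radial barrier, harmonic on the shell between the radii `a` and `b` in dimension `k + 1`.
It is Lipschitz and vanishes beyond `b`, so that it can be paired with a Laplacian without
boundary terms. -/
noncomputable def barrier (k : ℕ) (a b r : ℝ) : ℝ :=
  ∫ t in b..r, barrierSlope k a b t

variable {k : ℕ} {a b r : ℝ}

theorem measurable_barrierSlope : Measurable (barrierSlope k a b) :=
  Measurable.indicator (by fun_prop) measurableSet_Ioo

theorem norm_barrierSlope_le (ha : 0 < a) (t : ℝ) : ‖barrierSlope k a b t‖ ≤ (a ^ k)⁻¹ := by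
  by_cases ht : t ∈ Ioo a b
  · have := ha.trans ht.1
    rw [barrierSlope, indicator_of_mem ht, Real.norm_of_nonneg (by positivity)]
    gcongr
    exact ht.1.le
  · rw [barrierSlope, indicator_of_notMem ht, norm_zero]
    positivity

theorem intervalIntegrable_barrierSlope (ha : 0 < a) (c d : ℝ) :
    IntervalIntegrable (barrierSlope k a b) volume c d :=
  (intervalIntegrable_const (c := (a ^ k)⁻¹)).mono_fun'
    measurable_barrierSlope.aestronglyMeasurable (.of_forall (norm_barrierSlope_le ha))

theorem hasDerivAt_barrier (ha : 0 < a) (hr : r ∉ ({a, b} : Set ℝ)) :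
    HasDerivAt (barrier k a b) (barrierSlope k a b r) r := by
  refine intervalIntegral.integral_hasDerivAt_right (intervalIntegrable_barrierSlope ha b r)
    measurable_barrierSlope.stronglyMeasurable.stronglyMeasurableAtFilter ?_
  have hfrontier : r ∉ frontier (Ioo a b) := by
    rcases lt_or_ge a b with hab | hab
    · rwa [frontier_Ioo hab]
    · simp [Ioo_eq_empty hab.not_gt]
  refine ContinuousOn.continuousAt_indicator (fun t ht => ?_) hfrontier
  have ht₀ : t ≠ 0 := (ha.trans (interior_subset ht).1).ne'
  exact ((continuousAt_id.pow k).inv₀ (pow_ne_zero k ht₀)).continuousWithinAt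

theorem lipschitzWith_barrier (ha : 0 < a) :
    LipschitzWith (a ^ k)⁻¹.toNNReal (barrier k a b) := by
  refine .of_dist_le_mul fun r r' => ?_
  rw [Real.coe_toNNReal _ (by positivity), Real.dist_eq, Real.dist_eq, barrier, barrier,
    intervalIntegral.integral_interval_sub_left (intervalIntegrable_barrierSlope ha b r)
      (intervalIntegrable_barrierSlope ha b r')]
  exact intervalIntegral.norm_integral_le_of_norm_le_const fun t _ => norm_barrierSlope_le ha t

theorem barrier_of_le (hr : b ≤ r) : barrier k a b r = 0 := by
  refine intervalIntegral.integral_zero_ae (.of_forall fun t ht => ?_)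
  rw [uIoc_of_le hr] at ht
  exact indicator_of_notMem (fun h => h.2.not_gt ht.1) _

theorem abs_barrier_le (ha : 0 < a) (hr : 0 ≤ r) (hrb : r ≤ b) :
    |barrier k a b r| ≤ (a ^ k)⁻¹ * b := by
  refine (intervalIntegral.norm_integral_le_of_norm_le_const
    fun t _ => norm_barrierSlope_le ha t).trans ?_
  rw [abs_of_nonpos (sub_nonpos.2 hrb)]
  gcongr
  linarith

end Barrier

section Flux

variable {E : Type*} [NormedAddCommGroup E] [NormedSpace ℝ E] {w : E → ℝ} {a b : ℝ}

theorem integral_Ioo_fderiv_smul_apply (hw : ContDiff ℝ 1 w) (hab : a ≤ b) (θ : E) :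
    ∫ r in Ioo a b, fderiv ℝ w (r • θ) θ = w (b • θ) - w (a • θ) := by
  have hderiv (r : ℝ) : HasDerivAt (fun r : ℝ => w (r • θ)) (fderiv ℝ w (r • θ) θ) r := by
    have hline : HasDerivAt (fun r : ℝ => r • θ) θ r := by
      simpa using (hasDerivAt_id r).smul_const θ
    exact ((hw.differentiable one_ne_zero) (r • θ)).hasFDerivAt.comp_hasDerivAt r hline
  have hcont : Continuous fun r : ℝ => fderiv ℝ w (r • θ) θ :=
    ((hw.continuous_fderiv one_ne_zero).comp (by fun_prop)).clm_apply continuous_const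
  rw [← integral_Ioc_eq_integral_Ioo, ← intervalIntegral.integral_of_le hab]
  exact intervalIntegral.integral_eq_sub_of_hasDerivAt (fun r _ => hderiv r)
    (hcont.intervalIntegrable a b)

variable [MeasurableSpace E] [BorelSpace E] {μ : Measure E}

theorem integrable_barrierSlope_mul_fderiv_apply_div_norm [IsFiniteMeasureOnCompacts μ]
    {k : ℕ} (ha : 0 < a) (hw : ContDiff ℝ 1 w) (hw_supp : HasCompactSupport w) :
    Integrable (fun x => barrierSlope k a b ‖x‖ * (fderiv ℝ w x x / ‖x‖)) μ := by
  have hcont : Continuous (fderiv ℝ w) := hw.continuous_fderiv one_ne_zero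
  have hmeas : Measurable fun x => barrierSlope k a b ‖x‖ * (fderiv ℝ w x x / ‖x‖) :=
    (measurable_barrierSlope.comp measurable_norm).mul
      ((hcont.clm_apply continuous_id).measurable.div measurable_norm)
  refine ((hcont.integrable_of_hasCompactSupport (hw_supp.fderiv ℝ)).norm.const_mul
    (a ^ k)⁻¹).mono' hmeas.aestronglyMeasurable (.of_forall fun x => ?_)
  rw [norm_mul, norm_div, norm_norm]
  exact mul_le_mul (norm_barrierSlope_le ha _)
    (div_le_of_le_mul₀ (norm_nonneg _) (norm_nonneg _) ((fderiv ℝ w x).le_opNorm x))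
    (by positivity) (by positivity)

variable [FiniteDimensional ℝ E] [μ.IsAddHaarMeasure]

theorem integrable_sphere_smul (hw : Continuous w) (r : ℝ) :
    Integrable (fun θ : sphere (0 : E) 1 => w (r • θ.1)) μ.toSphere :=
  (by fun_prop : Continuous _).integrable_of_hasCompactSupport (.of_compactSpace _)

theorem continuous_sphereIntegral (hw : Continuous w) : Continuous (sphereIntegral μ w) := by
  have := continuous_parametric_integral_of_continuous (μ := μ.toSphere)
    (f := fun r (θ : sphere (0 : E) 1) => w (r • θ.1))
    (hw.comp (by fun_prop : Continuous fun p : ℝ × sphere (0 : E) 1 => p.1 • p.2.1)) isCompact_univ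
  rwa [Measure.restrict_univ] at this

theorem integral_barrierSlope_mul_fderiv_apply_div_norm [Nontrivial E] (ha : 0 < a) (hab : a ≤ b)
    (hw : ContDiff ℝ 1 w) (hw_supp : HasCompactSupport w) :
    ∫ x, barrierSlope (finrank ℝ E - 1) a b ‖x‖ * (fderiv ℝ w x x / ‖x‖) ∂μ =
      sphereIntegral μ w b - sphereIntegral μ w a := by
  rw [integral_eq_integral_toSphere_Ioi
    (integrable_barrierSlope_mul_fderiv_apply_div_norm ha hw hw_supp), sphereIntegral,
    sphereIntegral, ← integral_sub (integrable_sphere_smul hw.continuous b)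
    (integrable_sphere_smul hw.continuous a)]
  refine integral_congr_ae (.of_forall fun θ => ?_)
  have hshell : Ioo a b ⊆ Ioi 0 := fun r hr => ha.trans hr.1
  change _ = w (b • θ.1) - w (a • θ.1)
  rw [← integral_Ioo_fderiv_smul_apply hw hab, ← inter_eq_self_of_subset_right hshell,
    ← setIntegral_indicator measurableSet_Ioo]
  refine setIntegral_congr_fun measurableSet_Ioi fun r hr => ?_
  have hr₀ : 0 < r := hr
  by_cases hrab : r ∈ Ioo a b
  · have hnorm : ‖r • θ.1‖ = r := by simp [norm_smul, abs_of_pos hr₀]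
    rw [hnorm, barrierSlope, indicator_of_mem hrab, indicator_of_mem hrab, map_smul,
      smul_eq_mul, smul_eq_mul]
    field_simp
  · simp [barrierSlope, norm_smul, abs_of_pos hr₀, hrab]

end Flux

section Comparison

variable {E : Type*} [NormedAddCommGroup E] [InnerProductSpace ℝ E]
  [FiniteDimensional ℝ E] [MeasurableSpace E] [BorelSpace E] [Nontrivial E] {μ : Measure E}
  [μ.IsAddHaarMeasure] {w : E → ℝ} {a b : ℝ}

omit [Nontrivial E] in
theorem integrableOn_abs_laplacian_ball (hw : ContDiff ℝ 2 w) (r : ℝ) :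
    IntegrableOn (fun x => |Δ w x|) (ball 0 r) μ :=
  ((continuous_laplacian hw).abs.continuousOn.integrableOn_compact
    (isCompact_closedBall 0 r)).mono_set ball_subset_closedBall

theorem abs_sphereIntegral_sub_le (ha : 0 < a) (hab : a ≤ b) (hw : ContDiff ℝ 2 w)
    (hw_supp : HasCompactSupport w) :
    |sphereIntegral μ w b - sphereIntegral μ w a| ≤
      (a ^ (finrank ℝ E - 1))⁻¹ * b * ∫ x in ball 0 b, |Δ w x| ∂μ := by
  set k := finrank ℝ E - 1
  have hzero (x : E) (hx : x ∉ ball 0 b) : barrier k a b ‖x‖ * Δ w x = 0 := by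
    rw [barrier_of_le (by simpa using hx), zero_mul]
  rw [← integral_barrierSlope_mul_fderiv_apply_div_norm ha hab (hw.of_le one_le_two) hw_supp,
    integral_deriv_mul_fderiv_apply_div_norm (toFinite {a, b}).countable
      (lipschitzWith_barrier ha) (fun r hr => hasDerivAt_barrier ha hr) hw hw_supp, abs_neg,
    ← setIntegral_eq_integral_of_forall_compl_eq_zero hzero, ← integral_const_mul]
  change ‖(_ : ℝ)‖ ≤ _
  refine norm_integral_le_of_norm_le ((integrableOn_abs_laplacian_ball hw b).const_mul _) ?_
  filter_upwards [ae_restrict_mem measurableSet_ball] with x hx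
  rw [norm_mul]
  exact mul_le_mul_of_nonneg_right
    (abs_barrier_le ha (norm_nonneg x) (mem_ball_zero_iff.1 hx).le) (abs_nonneg _)

theorem setIntegral_shell_le (ha : 0 < a) (hw : ContDiff ℝ 2 w) (hw_supp : HasCompactSupport w) :
    ∫ x in norm ⁻¹' Ico a b, w x ∂μ ≤ (∫ r in Ico a b, r ^ (finrank ℝ E - 1)) *
      (sphereIntegral μ w a + (a ^ (finrank ℝ E - 1))⁻¹ * b * ∫ x in ball 0 b, |Δ w x| ∂μ) := by
  have hpow : Continuous fun r : ℝ => r ^ (finrank ℝ E - 1) := continuous_pow _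
  have hint {g : ℝ → ℝ} (hg : Continuous g) : IntegrableOn g (Ico a b) :=
    hg.integrableOn_Icc.mono_set Ico_subset_Icc_self
  rw [setIntegral_norm_preimage measurableSet_Ico (fun r hr => ha.trans_le hr.1)
    (hw.continuous.integrable_of_hasCompactSupport hw_supp).integrableOn, ← integral_mul_const]
  refine setIntegral_mono_on (hint (hpow.smul (continuous_sphereIntegral hw.continuous)))
    ((hint hpow).mul_const _) measurableSet_Ico fun r hr => ?_
  have hr₀ : 0 < r := ha.trans_le hr.1
  have hb : 0 < b := hr₀.trans hr.2
  have hmono : ∫ x in ball 0 r, |Δ w x| ∂μ ≤ ∫ x in ball 0 b, |Δ w x| ∂μ :=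
    setIntegral_mono_set (integrableOn_abs_laplacian_ball hw b) (.of_forall fun x => abs_nonneg _)
      (ball_subset_ball hr.2.le).eventuallyLE
  have hsphere := (le_abs_self _).trans (abs_sphereIntegral_sub_le (μ := μ) ha hr.1 hw hw_supp)
  rw [smul_eq_mul]
  gcongr
  calc sphereIntegral μ w r
      ≤ sphereIntegral μ w a + (a ^ (finrank ℝ E - 1))⁻¹ * r * ∫ x in ball 0 r, |Δ w x| ∂μ := by
        linarith
    _ ≤ _ := by
        gcongr
        exact hr.2.le

theorem setIntegral_ball_le (ha : 0 < a) (hab : a ≤ b) (hw : ContDiff ℝ 2 w)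
    (hw_supp : HasCompactSupport w) :
    ∫ x in ball 0 b, w x ∂μ ≤ (∫ x in ball 0 a, w x ∂μ) +
      (∫ r in Ico a b, r ^ (finrank ℝ E - 1)) *
      (sphereIntegral μ w a + (a ^ (finrank ℝ E - 1))⁻¹ * b * ∫ x in ball 0 b, |Δ w x| ∂μ) := by
  have hshell : ball (0 : E) b \ ball 0 a = norm ⁻¹' Ico a b := by
    ext x
    simp [and_comm]
  have hint := hw.continuous.integrable_of_hasCompactSupport hw_supp (μ := μ)
  grw [← setIntegral_shell_le ha hw hw_supp, ← hshell,
    setIntegral_sdiff measurableSet_ball hint.integrableOn (ball_subset_ball hab)]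
  linarith

end Comparison

section Extension

theorem exists_contDiff_hasCompactSupport_eventuallyEq {E F : Type*} [NormedAddCommGroup E]
    [NormedSpace ℝ E] [FiniteDimensional ℝ E] [NormedAddCommGroup F] [NormedSpace ℝ F]
    {n : ℕ∞} {K s : Set E} {u : E → F} (hK : IsCompact K) (hs : IsOpen s) (hKs : K ⊆ s)
    (hu : ContDiffOn ℝ n u s) :
    ∃ w : E → F, ContDiff ℝ n w ∧ HasCompactSupport w ∧ ∀ x ∈ K, w =ᶠ[𝓝 x] u := by
  obtain ⟨L, hL, hKL, hLs⟩ := exists_compact_between hK hs hKs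
  obtain ⟨χ, hχ_one, hχ_zero, -⟩ :=
    exists_contMDiffMap_one_nhds_of_subset_interior (n := n) (modelWithCornersSelf ℝ E)
      hK.isClosed hKL
  have hχ_supp : tsupport χ ⊆ L :=
    closure_minimal (fun x hx => not_imp_comm.1 (hχ_zero x) hx) hL.isClosed
  refine ⟨fun x => χ x • u x, contDiff_iff_contDiffAt.2 fun x => ?_, ?_, fun x hx => ?_⟩
  · by_cases hxs : x ∈ s
    · exact χ.contMDiff.contDiff.contDiffAt.smul (hu.contDiffAt (hs.mem_nhds hxs))
    · have hzero : χ =ᶠ[𝓝 x] 0 :=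
        notMem_tsupport_iff_eventuallyEq.1 fun hx => hxs (hLs (hχ_supp hx))
      refine (contDiffAt_const (c := (0 : F))).congr_of_eventuallyEq ?_
      filter_upwards [hzero] with y hy
      rw [hy, Pi.zero_apply, zero_smul]
  · exact HasCompactSupport.smul_right
      (hL.of_isClosed_subset (isClosed_tsupport χ) hχ_supp)
  · filter_upwards [eventually_nhdsSet_iff_forall.1 hχ_one x hx] with y hy
    rw [hy, one_smul]

end Extension

section Estimate

variable {E : Type*} [NormedAddCommGroup E] [InnerProductSpace ℝ E]
  [FiniteDimensional ℝ E] [MeasurableSpace E] [BorelSpace E] [Nontrivial E] {ε R : ℝ}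

theorem sphereIntegral_eq_measureReal_mul_setAverage (hε : 0 < ε) (u : E → ℝ) :
    sphereIntegral (volume : Measure E) u ε = (volume : Measure E).toSphere.real univ *
      ⨍ x in sphere 0 ε, u x ∂μH[(finrank ℝ E - 1 : ℕ)] := by
  rw [setAverage_sphere_hausdorffMeasure u hε, ← smul_eq_mul, measure_smul_average, sphereIntegral]

theorem setIntegral_ball_le_of_contDiffOn (hε : 0 < ε) (hεR : ε ≤ R) {u : E → ℝ} {s : Set E}
    (hs : IsOpen s) (hsub : closedBall 0 R ⊆ s) (hu : ContDiffOn ℝ 2 u s) :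
    ∫ x in ball 0 R, u x ≤ (∫ x in ball 0 ε, u x) +
      (∫ r in Ico ε R, r ^ (finrank ℝ E - 1)) *
      ((volume : Measure E).toSphere.real univ *
          (⨍ x in sphere 0 ε, u x ∂μH[(finrank ℝ E - 1 : ℕ)]) +
        (ε ^ (finrank ℝ E - 1))⁻¹ * R * ∫ x in ball 0 R, |Δ u x|) := by
  obtain ⟨w, hw, hw_supp, hwu⟩ :=
    exists_contDiff_hasCompactSupport_eventuallyEq (n := 2) (isCompact_closedBall 0 R) hs hsub hu
  have hball {r : ℝ} (hr : r ≤ R) : ∫ x in ball 0 r, w x = ∫ x in ball 0 r, u x :=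
    setIntegral_congr_fun measurableSet_ball fun x hx =>
      (hwu x (closedBall_subset_closedBall hr (ball_subset_closedBall hx))).eq_of_nhds
  have hsphere : ⨍ x in sphere 0 ε, w x ∂μH[(finrank ℝ E - 1 : ℕ)] =
      ⨍ x in sphere 0 ε, u x ∂μH[(finrank ℝ E - 1 : ℕ)] :=
    setAverage_congr_fun isClosed_sphere.measurableSet <| .of_forall fun x hx =>
      (hwu x (closedBall_subset_closedBall hεR (sphere_subset_closedBall hx))).eq_of_nhds
  have hΔ : ∫ x in ball 0 R, |Δ w x| = ∫ x in ball 0 R, |Δ u x| :=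
    setIntegral_congr_fun measurableSet_ball fun x hx => by
      simp only [(laplacian_congr_nhds (hwu x (ball_subset_closedBall hx))).eq_of_nhds]
  have hmain := setIntegral_ball_le (μ := volume) hε hεR hw hw_supp
  rwa [sphereIntegral_eq_measureReal_mul_setAverage hε, hball le_rfl, hball hεR, hsphere, hΔ]
    at hmain

theorem nonneg_L1_estimate_general (hε : 0 < ε) (hεR : ε < R) :
    ∃ C : ℝ, ∀ (u : E → ℝ) (s : Set E), IsOpen s → closedBall (0 : E) R ⊆ s →
      ContDiffOn ℝ 2 u s → (∀ x ∈ ball (0 : E) R, 0 ≤ u x) →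
      ∫ x in ball (0 : E) R, u x ≤
        C * ((∫ x in ball (0 : E) R, |Δ u x|) + (∫ x in ball (0 : E) ε, u x) +
          ⨍ x in sphere (0 : E) ε, u x ∂μH[(finrank ℝ E - 1 : ℕ)]) := by
  set k := finrank ℝ E - 1
  set M := ∫ r in Ico ε R, r ^ k
  set A := (volume : Measure E).toSphere.real univ
  set K := (ε ^ k)⁻¹ * R
  have hM : 0 ≤ M := setIntegral_nonneg measurableSet_Ico fun r hr =>
    pow_nonneg (hε.le.trans hr.1) k
  have hA : 0 ≤ A := measureReal_nonneg
  have hK : 0 ≤ K := mul_nonneg (by positivity) (hε.trans hεR).le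
  refine ⟨1 + M * A + M * K, fun u s hs hsub hu hu_nonneg => ?_⟩
  have hΔ : 0 ≤ ∫ x in ball (0 : E) R, |Δ u x| := integral_nonneg fun x => abs_nonneg _
  have hball : 0 ≤ ∫ x in ball (0 : E) ε, u x :=
    setIntegral_nonneg measurableSet_ball fun x hx => hu_nonneg x (ball_subset_ball hεR.le hx)
  have hsphere : 0 ≤ ⨍ x in sphere (0 : E) ε, u x ∂μH[(k : ℕ)] := by
    rw [setAverage_eq, smul_eq_mul]
    exact mul_nonneg (by positivity) (setIntegral_nonneg isClosed_sphere.measurableSet fun x hx =>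
      hu_nonneg x (sphere_subset_ball hεR hx))
  refine (setIntegral_ball_le_of_contDiffOn hε hεR.le hs hsub hu).trans ?_
  linarith [mul_nonneg (mul_nonneg hM hA) (add_nonneg hΔ hball),
    mul_nonneg (mul_nonneg hM hK) (add_nonneg hball hsphere)]

end Estimate

/-- L¹ estimate for nonnegative functions on the unit ball `B ⊂ ℝ³`: for
`ε ∈ (0,1/2)` there is `C = C(ε)`, independent of `u`, such that for every `u ≥ 0`
which is `C²` on a neighborhood of the closed unit ball, with `f = Δu`,
`∫_B u ≤ C·(∫_B |f| + ∫_{B(0,ε)} u + u_av(ε))`, where `u_av(ε)` is the mean of `u`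
over the sphere of radius `ε` with respect to 2-dimensional Hausdorff measure. -/
theorem nonneg_L1_estimate
    (ε : ℝ) (hε : ε ∈ Set.Ioo (0 : ℝ) (1 / 2)) :
    ∃ C : ℝ, ∀ (u : EuclideanSpace ℝ (Fin 3) → ℝ)
        (s : Set (EuclideanSpace ℝ (Fin 3))),
      IsOpen s → closedBall (0 : EuclideanSpace ℝ (Fin 3)) 1 ⊆ s →
      ContDiffOn ℝ 2 u s →
      (∀ x ∈ ball (0 : EuclideanSpace ℝ (Fin 3)) 1, 0 ≤ u x) →
      (∫ x in ball (0 : EuclideanSpace ℝ (Fin 3)) 1, u x) ≤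
        C * ((∫ x in ball (0 : EuclideanSpace ℝ (Fin 3)) 1, |lap u x|) +
          (∫ x in ball (0 : EuclideanSpace ℝ (Fin 3)) ε, u x) +
          ⨍ x in sphere (0 : EuclideanSpace ℝ (Fin 3)) ε, u x ∂(μH[2])) := by
  obtain ⟨C, hC⟩ := nonneg_L1_estimate_general (E := EuclideanSpace ℝ (Fin 3)) hε.1
    (hε.2.trans one_half_lt_one)
  refine ⟨C, fun u s hs hsub hu hu_nonneg => ?_⟩
  have hlap : ∫ x in ball 0 1, |lap u x| = ∫ x in ball 0 1, |Δ u x| :=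
    setIntegral_congr_fun measurableSet_ball fun x hx => congrArg _ <|
      lap_eq_laplacian (hu.contDiffAt (hs.mem_nhds (hsub (ball_subset_closedBall hx))))
  simpa [hlap] using hC u s hs hsub hu hu_nonneg
end

section
/- Let B = B(0,1) be the open unit ball in Euclidean ℝ³. Let z : B → ℝ^{3×3} be a C¹ field of symmetric 3×3 matrices and s : B → ℝ a C¹ function satisfying the contracted-Bianchi-type relation ∂_i s(x) = −6·∑_{j=1}^{3} ∂_j z_{ij}(x) for all x ∈ B and i = 1,2,3. Then there is an absolute constant C such that ∫_{B(0,1/4)} (s − s̄)² ≤ C·∫_{B(0,1/2)} |z|², where s̄ is the mean value of s over B(0,1/2) and |z|² is the squared Frobenius norm of z. -/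
open MeasureTheory Metric

/-!
Let `φ` be a mollifier at a small scale. Integrating `∇s` along segments,
`s - φ ⋆ s = ∑ᵢ ∫₀¹ (φ yᵢ)ₜ ⋆ ∂ᵢs dt`, where `ψₜ = t⁻ⁿ ψ(·/t)`, and `∂ᵢs` is the divergence of the
`i`-th row of `q = -6 z`. The operator `f ↦ ∫₀¹ ψₜ ⋆ ∂ⱼf dt` has Fourier multiplier
`2πi ξⱼ ∫₀¹ 𝓕ψ(tξ) dt`, which is bounded because `𝓕ψ` decays rapidly, so Plancherel controls
`s - φ ⋆ s` in `L²` by `q`. The function `φ ⋆ s` is nearly constant, since in its gradient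
`φ ⋆ div q` the derivative can be moved onto `φ`. Finally, the means of `s` over two concentric
balls differ by the integral of `∇s` against a compactly supported Lipschitz radial field, onto
which the divergence is again moved.
-/

open Set
open scoped FourierTransform SchwartzMap ContDiff RealInnerProductSpace Convolution NNReal Pointwise

section Plancherel

variable {V : Type*} [NormedAddCommGroup V] [InnerProductSpace ℝ V] [FiniteDimensional ℝ V]
  [MeasurableSpace V] [BorelSpace V]

theorem fourier_toLp_ae_eq {f : V → ℂ} (hf : Integrable f) (hf₂ : MemLp f 2) :
    (𝓕 (hf₂.toLp f) : Lp ℂ 2 (volume : Measure V)) =ᵐ[volume] 𝓕 f := by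
  have hcont : Continuous (𝓕 f) := VectorFourier.fourierIntegral_continuous
    Real.continuous_fourierChar (by exact continuous_inner) hf
  refine ae_eq_of_integral_contDiff_smul_eq ((Lp.memLp _).locallyIntegrable one_le_two)
    hcont.locallyIntegrable fun g hg hgc => ?_
  have hgc' : HasCompactSupport fun x => (g x : ℂ) := hgc.comp_left Complex.ofReal_zero
  set G : 𝓢(V, ℂ) := hgc'.toSchwartzMap (Complex.ofRealCLM.contDiff.comp hg)
  calc ∫ x, G x • (𝓕 (hf₂.toLp f) : Lp ℂ 2 (volume : Measure V)) x
    _ = ∫ x, (𝓕 G) x • hf₂.toLp f x := by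
        simpa only [TemperedDistribution.fourier_apply, Lp.toTemperedDistribution_apply] using
          (DFunLike.congr_fun (Lp.fourier_toTemperedDistribution_eq (hf₂.toLp f)) G).symm
    _ = ∫ x, 𝓕 G x • f x := integral_congr_ae <| by
        filter_upwards [hf₂.coeFn_toLp] with x hx
        rw [hx]
    _ = ∫ x, G x • 𝓕 f x := by
        simpa only [flip_innerₗ] using! VectorFourier.integral_fourierIntegral_smul_eq_flip
          (L := innerₗ V) Real.continuous_fourierChar (by exact continuous_inner)
          G.integrable hf

theorem integral_norm_sq_eq_norm_sq {α : Type*} [MeasurableSpace α] {μ : Measure α}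
    (f : Lp ℂ 2 μ) : ∫ x, ‖f x‖ ^ 2 ∂μ = ‖f‖ ^ 2 := by
  have h := L2.inner_def (𝕜 := ℂ) f f
  simp only [inner_self_eq_norm_sq_to_K] at h
  rw [← Complex.ofReal_inj, ← integral_complex_ofReal]
  push_cast
  exact h.symm

theorem integral_norm_fourier_sq {f : V → ℂ} (hf : Integrable f) (hf₂ : MemLp f 2) :
    ∫ ξ, ‖𝓕 f ξ‖ ^ 2 = ∫ x, ‖f x‖ ^ 2 := by
  calc ∫ ξ, ‖𝓕 f ξ‖ ^ 2 = ∫ ξ, ‖(𝓕 (hf₂.toLp f) : Lp ℂ 2 (volume : Measure V)) ξ‖ ^ 2 :=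
        integral_congr_ae <| (fourier_toLp_ae_eq hf hf₂).symm.mono fun ξ h => by simp only [h]
    _ = ∫ x, ‖hf₂.toLp f x‖ ^ 2 := by
        rw [integral_norm_sq_eq_norm_sq, Lp.norm_fourier_eq, integral_norm_sq_eq_norm_sq]
    _ = ∫ x, ‖f x‖ ^ 2 := integral_congr_ae <| hf₂.coeFn_toLp.mono fun x h => by simp only [h]

theorem memLp_fourier {f : V → ℂ} (hf : Integrable f) (hf₂ : MemLp f 2) : MemLp (𝓕 f) 2 :=
  (memLp_congr_ae (fourier_toLp_ae_eq hf hf₂)).1 (Lp.memLp _)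

theorem integral_norm_sq_le_of_fourier_le {f g : V → ℂ} {C : ℝ}
    (hf : Integrable f) (hf₂ : MemLp f 2) (hg : Integrable g) (hg₂ : MemLp g 2)
    (h : ∀ ξ, ‖𝓕 f ξ‖ ≤ C * ‖𝓕 g ξ‖) : ∫ x, ‖f x‖ ^ 2 ≤ C ^ 2 * ∫ x, ‖g x‖ ^ 2 := by
  rw [← integral_norm_fourier_sq hf hf₂, ← integral_norm_fourier_sq hg hg₂,
    ← integral_const_mul]
  refine integral_mono ((memLp_fourier hf hf₂).integrable_norm_pow two_ne_zero)
    (((memLp_fourier hg hg₂).integrable_norm_pow two_ne_zero).const_mul _) fun ξ => ?_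
  simpa only [mul_pow] using pow_le_pow_left₀ (norm_nonneg _) (h ξ) 2

end Plancherel

theorem memLp_two_of_integrable_of_norm_le {α F : Type*} [MeasurableSpace α] {μ : Measure α}
    [NormedAddCommGroup F] {f : α → F} (hf : Integrable f μ) {M : ℝ} (hM : ∀ x, ‖f x‖ ≤ M) :
    MemLp f 2 μ := by
  refine (memLp_two_iff_integrable_sq_norm hf.aestronglyMeasurable).2 ?_
  refine (hf.norm.const_mul M).mono' (hf.aestronglyMeasurable.norm.pow 2) (.of_forall fun x => ?_)
  rw [norm_pow, norm_norm, sq]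
  exact mul_le_mul_of_nonneg_right (hM x) (norm_nonneg _)

section TranslateAverage

variable {V Ω F : Type*} [MeasurableSpace Ω] {ν : Measure Ω} {w : Ω → ℝ} {τ : Ω → V}
  [NormedAddCommGroup F] [NormedSpace ℝ F]

/-- The superposition `∫ w(p) f(· - τ(p)) dν(p)` of translates of `f`, i.e. the convolution of `f`
with the image under `τ` of the measure `w ν`. -/
noncomputable def translateAverage [Sub V] (ν : Measure Ω) (w : Ω → ℝ) (τ : Ω → V) (f : V → F)
    (x : V) : F :=
  ∫ p, w p • f (x - τ p) ∂ν

theorem norm_translateAverage_le [Sub V] (hw : Integrable w ν) {f : V → F} {M : ℝ}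
    (hM : ∀ x, ‖f x‖ ≤ M) (x : V) : ‖translateAverage ν w τ f x‖ ≤ (∫ p, ‖w p‖ ∂ν) * M := by
  rw [← integral_mul_const]
  refine norm_integral_le_of_norm_le (hw.norm.mul_const M) (.of_forall fun p => ?_)
  rw [norm_smul]
  exact mul_le_mul_of_nonneg_left (hM _) (norm_nonneg _)

theorem integrable_smul_comp_sub [NormedAddCommGroup V] [SecondCountableTopology V]
    [MeasurableSpace V] [BorelSpace V] {μ : Measure V} [SFinite μ] [μ.IsAddRightInvariant]
    [SFinite ν] (hw : Integrable w ν) (hτ : Measurable τ) {f : V → F} (hfc : Continuous f)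
    (hf : Integrable f μ) :
    Integrable (fun q : V × Ω => w q.2 • f (q.1 - τ q.2)) (μ.prod ν) := by
  have hτ' : Measurable fun q : V × Ω => q.1 - τ q.2 := measurable_fst.sub (hτ.comp measurable_snd)
  have hmeas : AEStronglyMeasurable (fun q : V × Ω => w q.2 • f (q.1 - τ q.2)) (μ.prod ν) :=
    hw.aestronglyMeasurable.comp_snd.smul
      (hfc.stronglyMeasurable.comp_measurable hτ').aestronglyMeasurable
  refine (integrable_prod_iff' hmeas).2
    ⟨.of_forall fun p => (hf.comp_sub_right (τ p)).smul (w p), ?_⟩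
  simp only [norm_smul, integral_const_mul, integral_sub_right_eq_self fun x => ‖f x‖]
  exact hw.norm.mul_const _

theorem integrable_translateAverage [NormedAddCommGroup V] [SecondCountableTopology V]
    [MeasurableSpace V] [BorelSpace V] {μ : Measure V} [SFinite μ] [μ.IsAddRightInvariant]
    [SFinite ν] (hw : Integrable w ν) (hτ : Measurable τ) {f : V → F} (hfc : Continuous f)
    (hf : Integrable f μ) : Integrable (translateAverage ν w τ f) μ :=
  (integrable_smul_comp_sub hw hτ hfc hf).integral_prod_left

variable [NormedAddCommGroup V] [InnerProductSpace ℝ V] [FiniteDimensional ℝ V]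
  [MeasurableSpace V] [BorelSpace V]

theorem fourier_comp_sub_right (f : V → ℂ) (v ξ : V) :
    𝓕 (fun x => f (x - v)) ξ = 𝐞 (-⟪v, ξ⟫) • 𝓕 f ξ := by
  simp only [sub_eq_add_neg, ← inner_neg_left]
  exact congrFun (VectorFourier.fourierIntegral_comp_add_right 𝐞 volume (innerₗ V) f (-v)) ξ

theorem fourier_translateAverage [SFinite ν] (hw : Integrable w ν) (hτ : Measurable τ) {f : V → ℂ}
    (hfc : Continuous f) (hf : Integrable f) (ξ : V) :
    𝓕 (translateAverage ν w τ f) ξ = (∫ p, 𝐞 (-⟪τ p, ξ⟫) • (w p : ℂ) ∂ν) * 𝓕 f ξ := by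
  have hint : Integrable (fun q : V × Ω => 𝐞 (-⟪q.1, ξ⟫) • w q.2 • f (q.1 - τ q.2))
      (volume.prod ν) := by
    have hchar : Continuous fun x : V => (𝐞 (-⟪x, ξ⟫) : ℂ) := by fun_prop
    exact (integrable_smul_comp_sub hw hτ hfc hf).bdd_smul 1
      (hchar.measurable.comp measurable_fst).aestronglyMeasurable
      (.of_forall fun q => (Circle.norm_coe _).le)
  calc 𝓕 (translateAverage ν w τ f) ξ
      = ∫ x, ∫ p, 𝐞 (-⟪x, ξ⟫) • w p • f (x - τ p) ∂ν := by
        simp only [Real.fourier_eq, translateAverage, Circle.smul_def, integral_smul]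
    _ = ∫ p, w p • 𝓕 (fun x => f (x - τ p)) ξ ∂ν := by
        rw [integral_integral_swap hint]
        simp only [Real.fourier_eq, smul_comm _ (w _), integral_smul]
    _ = _ := by
        rw [← integral_mul_const]
        simp only [fourier_comp_sub_right, Circle.smul_def, smul_eq_mul, Complex.real_smul]
        congr with p
        ring

end TranslateAverage

theorem fderiv_ofReal_apply {E : Type*} [NormedAddCommGroup E] [NormedSpace ℝ E]
    {f : E → ℝ} (hf : ContDiff ℝ 1 f) (x v : E) :
    fderiv ℝ (fun y => (f y : ℂ)) x v = fderiv ℝ f x v := by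
  have h := (Complex.ofRealCLM.hasFDerivAt.comp x
    (hf.differentiable one_ne_zero x).hasFDerivAt).fderiv
  exact DFunLike.congr_fun h v

theorem exists_norm_mul_norm_integral_smul_le {E F : Type*} [NormedAddCommGroup E]
    [NormedSpace ℝ E] [NormedAddCommGroup F] [NormedSpace ℝ F] (φ : 𝓢(E, F)) :
    ∃ C, ∀ ξ : E, ‖ξ‖ * ‖∫ t in (0 : ℝ)..1, φ (t • ξ)‖ ≤ C := by
  obtain ⟨C₀, hC₀, h₀⟩ := φ.decay 0 0
  obtain ⟨C₂, hC₂, h₂⟩ := φ.decay 2 0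
  have hφ : ∀ η, ‖φ η‖ ≤ (C₀ + C₂) * (1 + ‖η‖ ^ 2)⁻¹ := fun η => by
    have h₀' := h₀ η
    have h₂' := h₂ η
    simp only [pow_zero, one_mul, norm_iteratedFDeriv_zero] at h₀' h₂'
    rw [← div_eq_mul_inv, le_div_iff₀ (by positivity)]
    linarith
  refine ⟨(C₀ + C₂) * (Real.pi / 2), fun ξ => ?_⟩
  have hbound : ‖∫ t in (0 : ℝ)..1, φ (t • ξ)‖ ≤
      ∫ t in (0 : ℝ)..1, (C₀ + C₂) * (1 + (‖ξ‖ * t) ^ 2)⁻¹ := by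
    refine intervalIntegral.norm_integral_le_of_norm_le zero_le_one (.of_forall fun t _ => ?_) ?_
    · simpa only [norm_smul, mul_pow, mul_comm, Real.norm_eq_abs, sq_abs] using hφ (t • ξ)
    · refine Continuous.intervalIntegrable (.mul continuous_const (.inv₀ (by fun_prop) ?_)) _ _
      exact fun t => by positivity
  calc ‖ξ‖ * ‖∫ t in (0 : ℝ)..1, φ (t • ξ)‖
      ≤ ‖ξ‖ * ∫ t in (0 : ℝ)..1, (C₀ + C₂) * (1 + (‖ξ‖ * t) ^ 2)⁻¹ := by gcongr
    _ = (C₀ + C₂) * Real.arctan ‖ξ‖ := by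
        rw [intervalIntegral.integral_const_mul, mul_left_comm,
          intervalIntegral.mul_integral_comp_mul_left (f := fun t => (1 + t ^ 2)⁻¹)]
        simp only [mul_zero, mul_one, integral_inv_one_add_sq, Real.arctan_zero, sub_zero]
    _ ≤ (C₀ + C₂) * (Real.pi / 2) := by
        gcongr
        exact (Real.arctan_lt_pi_div_two _).le

section Dilation

variable {V : Type*} [NormedAddCommGroup V] [InnerProductSpace ℝ V] [FiniteDimensional ℝ V]
  [MeasurableSpace V] [BorelSpace V] {F : Type*} [NormedAddCommGroup F] [NormedSpace ℝ F]

/-- The average over `t ∈ (0, 1]` of the convolutions of `g` with the dilates `t⁻ⁿ ψ(·/t)` of `ψ`.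
Writing it as `∫₀¹ ∫ ψ(y) g(x - t y) dy dt` avoids the singular factor `t⁻ⁿ`. -/
noncomputable def dilationAverage (ψ : V → ℝ) (g : V → F) : V → F :=
  translateAverage ((volume.restrict (Ioc (0 : ℝ) 1)).prod volume) (fun p => ψ p.2)
    (fun p => p.1 • p.2) g

theorem integrable_dilationAverage_weight {ψ : V → ℝ} (hψ : Integrable ψ) :
    Integrable (fun p : ℝ × V => ψ p.2) ((volume.restrict (Ioc (0 : ℝ) 1)).prod volume) :=
  hψ.comp_snd _

theorem integrable_dilationAverage {ψ : V → ℝ} (hψ : Integrable ψ) {g : V → F} (hgc : Continuous g)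
    (hg : HasCompactSupport g) : Integrable (dilationAverage ψ g) :=
  integrable_translateAverage (integrable_dilationAverage_weight hψ) (by fun_prop) hgc
    (hgc.integrable_of_hasCompactSupport hg)

theorem memLp_dilationAverage {ψ : V → ℝ} (hψ : Integrable ψ) {g : V → F} (hgc : Continuous g)
    (hg : HasCompactSupport g) : MemLp (dilationAverage ψ g) 2 := by
  obtain ⟨M, hM⟩ := hg.exists_bound_of_continuous hgc
  exact memLp_two_of_integrable_of_norm_le (integrable_dilationAverage hψ hgc hg)
    (norm_translateAverage_le (integrable_dilationAverage_weight hψ) hM)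

theorem integrable_dilationAverage_integrand {ψ g : V → ℝ} (hψ : Integrable ψ) (hgc : Continuous g)
    (hg : HasCompactSupport g) (x : V) :
    Integrable (fun p : ℝ × V => ψ p.2 • g (x - p.1 • p.2))
      ((volume.restrict (Ioc (0 : ℝ) 1)).prod volume) := by
  obtain ⟨M, hM⟩ := hg.exists_bound_of_continuous hgc
  exact (integrable_dilationAverage_weight hψ).smul_bdd M (by fun_prop) (.of_forall fun p => hM _)

theorem dilationAverage_sum {ι : Type*} [Fintype ι] {ψ : V → ℝ} {g : ι → V → ℝ} (hψ : Integrable ψ)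
    (hgc : ∀ j, Continuous (g j)) (hg : ∀ j, HasCompactSupport (g j)) (x : V) :
    dilationAverage ψ (fun y => ∑ j, g j y) x = ∑ j, dilationAverage ψ (g j) x := by
  simp only [dilationAverage, translateAverage, Finset.smul_sum]
  exact integral_finsetSum _ fun j _ => integrable_dilationAverage_integrand hψ (hgc j) (hg j) x

theorem fourier_dilationAverage {ψ : V → ℝ} (hψ : Integrable ψ) {g : V → ℂ}
    (hgc : Continuous g) (hg : Integrable g) (ξ : V) :
    𝓕 (dilationAverage ψ g) ξ =
      (∫ t in (0 : ℝ)..1, 𝓕 (fun y => (ψ y : ℂ)) (t • ξ)) * 𝓕 g ξ := by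
  have hw := integrable_dilationAverage_weight hψ
  have hint : Integrable (fun p : ℝ × V => 𝐞 (-⟪p.1 • p.2, ξ⟫) • (ψ p.2 : ℂ))
      ((volume.restrict (Ioc (0 : ℝ) 1)).prod volume) := by
    have hchar : Continuous fun p : ℝ × V => (𝐞 (-⟪p.1 • p.2, ξ⟫) : ℂ) := by fun_prop
    exact hw.ofReal.bdd_smul 1 hchar.aestronglyMeasurable
      (.of_forall fun q => (Circle.norm_coe _).le)
  rw [dilationAverage, fourier_translateAverage hw (by fun_prop) hgc hg, integral_prod _ hint,
    intervalIntegral.integral_of_le zero_le_one]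
  simp only [Real.fourier_eq, real_inner_smul_left, real_inner_smul_right]

theorem fourier_fderiv_apply {f : V → ℂ} (hf : ContDiff ℝ 1 f) (hfc : HasCompactSupport f)
    (v ξ : V) : 𝓕 (fun x => fderiv ℝ f x v) ξ = 2 * Real.pi * Complex.I * ⟪ξ, v⟫ * 𝓕 f ξ := by
  have hint : Integrable (fderiv ℝ f) :=
    (hf.continuous_fderiv one_ne_zero).integrable_of_hasCompactSupport (hfc.fderiv ℝ)
  have h := DFunLike.congr_fun (congrFun (Real.fourier_fderiv
    (hf.continuous.integrable_of_hasCompactSupport hfc) (hf.differentiable one_ne_zero) hint) ξ) v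
  rw [Real.fourier_continuousLinearMap_apply hint] at h
  have hinner : (-innerSL ℝ : V →L[ℝ] V →L[ℝ] ℝ) ξ v = -⟪ξ, v⟫ := rfl
  rw [h, VectorFourier.fourierSMulRight_apply, hinner, Complex.real_smul, smul_eq_mul]
  push_cast
  ring

theorem exists_integral_norm_dilationAverage_fderiv_sq_le {ψ : V → ℝ} (hψ : ContDiff ℝ ∞ ψ)
    (hψc : HasCompactSupport ψ) :
    ∃ C, ∀ (v : V) (f : V → ℂ), ContDiff ℝ 1 f → HasCompactSupport f →
      ∫ x, ‖dilationAverage ψ (fun x => fderiv ℝ f x v) x‖ ^ 2 ≤ C * ‖v‖ ^ 2 * ∫ x, ‖f x‖ ^ 2 := by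
  have hψi : Integrable ψ := hψ.continuous.integrable_of_hasCompactSupport hψc
  have hψc' : HasCompactSupport fun y => (ψ y : ℂ) := hψc.comp_left Complex.ofReal_zero
  set φ : 𝓢(V, ℂ) := 𝓕 (hψc'.toSchwartzMap (Complex.ofRealCLM.contDiff.comp hψ))
  obtain ⟨C, hC⟩ := exists_norm_mul_norm_integral_smul_le φ
  refine ⟨(2 * Real.pi * C) ^ 2, fun v f hf hfc => ?_⟩
  rw [← mul_pow]
  have hdc : Continuous fun x => fderiv ℝ f x v := by fun_prop (disch := exact one_ne_zero)
  have hds : HasCompactSupport fun x => fderiv ℝ f x v := hfc.fderiv_apply ℝ v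
  have hdi : Integrable fun x => fderiv ℝ f x v := hdc.integrable_of_hasCompactSupport hds
  refine integral_norm_sq_le_of_fourier_le (integrable_dilationAverage hψi hdc hds)
    (memLp_dilationAverage hψi hdc hds)
    (hf.continuous.integrable_of_hasCompactSupport hfc)
    (hf.continuous.memLp_of_hasCompactSupport hfc) fun ξ => ?_
  have hφ : 𝓕 (fun y => (ψ y : ℂ)) = φ := rfl
  rw [fourier_dilationAverage hψi hdc hdi, fourier_fderiv_apply hf hfc, hφ]
  calc _ = 2 * Real.pi * |⟪ξ, v⟫| * ‖∫ t in (0 : ℝ)..1, φ (t • ξ)‖ * ‖𝓕 f ξ‖ := by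
        simp [abs_of_pos Real.pi_pos]
        ring
    _ ≤ 2 * Real.pi * (‖ξ‖ * ‖v‖) * ‖∫ t in (0 : ℝ)..1, φ (t • ξ)‖ * ‖𝓕 f ξ‖ := by
        gcongr
        exact abs_real_inner_le_norm ξ v
    _ = 2 * Real.pi * ‖v‖ * (‖ξ‖ * ‖∫ t in (0 : ℝ)..1, φ (t • ξ)‖) * ‖𝓕 f ξ‖ := by
        ring
    _ ≤ 2 * Real.pi * ‖v‖ * C * ‖𝓕 f ξ‖ := by
        gcongr
        exact hC ξ
    _ = 2 * Real.pi * C * ‖v‖ * ‖𝓕 f ξ‖ := by ring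

theorem dilationAverage_ofReal (ψ g : V → ℝ) (x : V) :
    dilationAverage ψ (fun y => (g y : ℂ)) x = dilationAverage ψ g x := by
  simp only [dilationAverage, translateAverage, Complex.real_smul, smul_eq_mul]
  exact_mod_cast integral_ofReal (𝕜 := ℂ) (f := fun p : ℝ × V => ψ p.2 * g (x - p.1 • p.2))

theorem exists_integral_dilationAverage_fderiv_sq_le {ψ : V → ℝ} (hψ : ContDiff ℝ ∞ ψ)
    (hψc : HasCompactSupport ψ) :
    ∃ C, ∀ (v : V) (f : V → ℝ), ContDiff ℝ 1 f → HasCompactSupport f →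
      ∫ x, dilationAverage ψ (fun x => fderiv ℝ f x v) x ^ 2 ≤ C * ‖v‖ ^ 2 * ∫ x, f x ^ 2 := by
  obtain ⟨C, hC⟩ := exists_integral_norm_dilationAverage_fderiv_sq_le hψ hψc
  refine ⟨C, fun v f hf hfc => ?_⟩
  simpa only [fderiv_ofReal_apply hf, dilationAverage_ofReal, Complex.norm_real, Real.norm_eq_abs,
    sq_abs] using hC v (fun x => (f x : ℂ)) (Complex.ofRealCLM.contDiff.comp hf)
      (hfc.comp_left Complex.ofReal_zero)

end Dilation

theorem integral_fderiv_segment {E : Type*} [NormedAddCommGroup E] [NormedSpace ℝ E] {s : E → ℝ}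
    (hs : ContDiff ℝ 1 s) (x v : E) (a b : ℝ) :
    ∫ t in a..b, fderiv ℝ s (x + t • v) v = s (x + b • v) - s (x + a • v) := by
  have hline (t : ℝ) : HasDerivAt (fun t : ℝ => x + t • v) v t := by
    simpa only [one_smul, id] using ((hasDerivAt_id t).smul_const v).const_add x
  refine intervalIntegral.integral_eq_sub_of_hasDerivAt (f := fun t => s (x + t • v))
    (fun t _ => ((hs.differentiable one_ne_zero _).hasFDerivAt.comp_hasDerivAt t (hline t))) ?_
  exact Continuous.intervalIntegrable (by fun_prop (disch := exact one_ne_zero)) a b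

theorem apply_eq_sum_single {ι : Type*} [Fintype ι] [DecidableEq ι]
    (A : EuclideanSpace ℝ ι →L[ℝ] ℝ) (v : EuclideanSpace ℝ ι) :
    A v = ∑ i, v i * A (EuclideanSpace.single i 1) := by
  conv_lhs => rw [← (EuclideanSpace.basisFun ι ℝ).sum_repr v]
  simp only [map_sum, map_smul, EuclideanSpace.basisFun_repr, EuclideanSpace.basisFun_apply,
    smul_eq_mul]

section Divergence

variable {ι : Type*} [Fintype ι] [DecidableEq ι]

/-- The divergence `∑ⱼ ∂ⱼ Fⱼ` of the vector field with components `F j`. -/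
noncomputable def divergence (F : ι → EuclideanSpace ℝ ι → ℝ) (x : EuclideanSpace ℝ ι) : ℝ :=
  ∑ j, fderiv ℝ (F j) x (EuclideanSpace.single j 1)

theorem continuous_divergence {F : ι → EuclideanSpace ℝ ι → ℝ} (hF : ∀ j, ContDiff ℝ 1 (F j)) :
    Continuous (divergence F) :=
  continuous_finsetSum _ fun j _ => by fun_prop (disch := exact one_ne_zero)

theorem hasCompactSupport_divergence {F : ι → EuclideanSpace ℝ ι → ℝ}
    (hF : ∀ j, HasCompactSupport (F j)) : HasCompactSupport (divergence F) := by
  have hsum := HasCompactSupport.finset_sum (s := Finset.univ) fun j _ =>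
    (hF j).fderiv_apply ℝ (EuclideanSpace.single j 1)
  rwa [Finset.sum_fn] at hsum

theorem exists_integral_dilationAverage_divergence_sq_le {ψ : EuclideanSpace ℝ ι → ℝ}
    (hψ : ContDiff ℝ ∞ ψ) (hψc : HasCompactSupport ψ) :
    ∃ C, ∀ F : ι → EuclideanSpace ℝ ι → ℝ, (∀ j, ContDiff ℝ 1 (F j)) →
      (∀ j, HasCompactSupport (F j)) →
      ∫ x, dilationAverage ψ (divergence F) x ^ 2 ≤ C * ∑ j, ∫ x, F j x ^ 2 := by
  obtain ⟨C, hC⟩ := exists_integral_dilationAverage_fderiv_sq_le hψ hψc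
  have hψi : Integrable ψ := hψ.continuous.integrable_of_hasCompactSupport hψc
  refine ⟨Fintype.card ι * C, fun F hF hFc => ?_⟩
  set A : ι → EuclideanSpace ℝ ι → ℝ := fun j =>
    dilationAverage ψ fun x => fderiv ℝ (F j) x (EuclideanSpace.single j 1)
  have hdc (j : ι) : Continuous fun x => fderiv ℝ (F j) x (EuclideanSpace.single j 1) := by
    fun_prop (disch := exact one_ne_zero)
  have hds (j : ι) := (hFc j).fderiv_apply ℝ (EuclideanSpace.single j 1)
  have hA (j : ι) : Integrable fun x => A j x ^ 2 :=
    (memLp_dilationAverage hψi (hdc j) (hds j)).integrable_sq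
  calc ∫ x, dilationAverage ψ (divergence F) x ^ 2 = ∫ x, (∑ j, A j x) ^ 2 :=
        integral_congr_ae <| .of_forall fun x =>
          congrArg (· ^ 2) (dilationAverage_sum hψi hdc hds x)
    _ ≤ ∫ x, Fintype.card ι * ∑ j, A j x ^ 2 :=
        integral_mono_of_nonneg (.of_forall fun x => sq_nonneg _)
          ((integrable_finsetSum _ fun j _ => hA j).const_mul _)
          (.of_forall fun x => sq_sum_le_card_mul_sum_sq)
    _ = Fintype.card ι * ∑ j, ∫ x, A j x ^ 2 := by
        rw [integral_const_mul, integral_finsetSum _ fun j _ => hA j]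
    _ ≤ Fintype.card ι * ∑ j, C * ∫ x, F j x ^ 2 := by
        gcongr with j
        simpa using hC (EuclideanSpace.single j 1) (F j) (hF j) (hFc j)
    _ = Fintype.card ι * C * ∑ j, ∫ x, F j x ^ 2 := by rw [← Finset.mul_sum, mul_assoc]

theorem sum_dilationAverage_fderiv {φ s : EuclideanSpace ℝ ι → ℝ} (hφ : Continuous φ)
    (hφc : HasCompactSupport φ) (hφ₁ : ∫ y, φ y = 1) (hs : ContDiff ℝ 1 s)
    (hsc : HasCompactSupport s) (x : EuclideanSpace ℝ ι) :
    ∑ i, dilationAverage (fun y => φ y * y i)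
        (fun z => fderiv ℝ s z (EuclideanSpace.single i 1)) x =
      s x - (φ ⋆[ContinuousLinearMap.lsmul ℝ ℝ] s) x := by
  have hint (i : ι) := integrable_dilationAverage_integrand
    (ψ := fun y : EuclideanSpace ℝ ι => φ y * y i)
    ((by fun_prop : Continuous _).integrable_of_hasCompactSupport hφc.mul_right)
    (by fun_prop (disch := exact one_ne_zero)) (hsc.fderiv_apply ℝ (EuclideanSpace.single i 1)) x
  have hsum (p : ℝ × EuclideanSpace ℝ ι) :
      ∑ i, (φ p.2 * p.2 i) • fderiv ℝ s (x - p.1 • p.2) (EuclideanSpace.single i 1) =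
        φ p.2 * fderiv ℝ s (x - p.1 • p.2) p.2 := by
    simp only [apply_eq_sum_single _ p.2, Finset.mul_sum, smul_eq_mul, mul_assoc]
  have hseg (y : EuclideanSpace ℝ ι) :
      ∫ t in Ioc (0 : ℝ) 1, fderiv ℝ s (x - t • y) y = s x - s (x - y) := by
    have h := integral_fderiv_segment hs x (-y) 0 1
    simp only [smul_neg, ← sub_eq_add_neg, map_neg, intervalIntegral.integral_neg, one_smul,
      zero_smul, sub_zero] at h
    rw [← intervalIntegral.integral_of_le zero_le_one]
    linarith
  have hφs : Integrable fun y => φ y * s (x - y) := by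
    have := hs.continuous
    exact (by fun_prop : Continuous _).integrable_of_hasCompactSupport hφc.mul_right
  have htot := integrable_finsetSum Finset.univ fun i _ => hint i
  simp only [hsum] at htot
  calc ∑ i, dilationAverage (fun y => φ y * y i)
          (fun z => fderiv ℝ s z (EuclideanSpace.single i 1)) x
      = ∫ p, φ p.2 * fderiv ℝ s (x - p.1 • p.2) p.2
          ∂(volume.restrict (Ioc (0 : ℝ) 1)).prod volume := by
        simp only [dilationAverage, translateAverage, ← integral_finsetSum _ fun i _ => hint i,
          hsum]
    _ = ∫ y, φ y * s x - φ y * s (x - y) := by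
        rw [integral_prod_symm _ htot]
        simp only [integral_const_mul, hseg, mul_sub]
    _ = s x - ∫ y, φ y * s (x - y) := by
        rw [integral_sub ((hφ.integrable_of_hasCompactSupport hφc).mul_const _) hφs,
          integral_mul_const, hφ₁, one_mul]

end Divergence

section SquareMean

variable {α : Type*} [MeasurableSpace α] {μ : Measure α} [IsFiniteMeasure μ] {f : α → ℝ}

theorem integral_sub_average_sq_add (hf : MemLp f 2 μ) (c : ℝ) :
    ∫ x, (f x - ⨍ y, f y ∂μ) ^ 2 ∂μ + μ.real univ * (⨍ y, f y ∂μ - c) ^ 2 =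
      ∫ x, (f x - c) ^ 2 ∂μ := by
  set m := ⨍ y, f y ∂μ
  have hfm : MemLp (fun x => f x - m) 2 μ := hf.sub (memLp_const m)
  have hlin : Integrable (fun x => 2 * (m - c) * (f x - m)) μ :=
    (hfm.integrable one_le_two).const_mul _
  have hmean : ∫ x, f x - m ∂μ = 0 := integral_sub_average μ f
  calc ∫ x, (f x - m) ^ 2 ∂μ + μ.real univ * (m - c) ^ 2
      = ∫ x, ((f x - m) ^ 2 + 2 * (m - c) * (f x - m)) + (m - c) ^ 2 ∂μ := by
        rw [integral_add (by exact hfm.integrable_sq.add hlin) (integrable_const _),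
          integral_add hfm.integrable_sq hlin, integral_const_mul, hmean, integral_const,
          smul_eq_mul, mul_zero, add_zero]
    _ = ∫ x, (f x - c) ^ 2 ∂μ := by
        congr with x
        ring

theorem integral_sub_average_sq_le (hf : MemLp f 2 μ) (c : ℝ) :
    ∫ x, (f x - ⨍ y, f y ∂μ) ^ 2 ∂μ ≤ ∫ x, (f x - c) ^ 2 ∂μ := by
  rw [← integral_sub_average_sq_add hf c]
  exact le_add_of_nonneg_right (by positivity)

theorem sq_integral_le (hf : MemLp f 2 μ) :
    (∫ x, f x ∂μ) ^ 2 ≤ μ.real univ * ∫ x, f x ^ 2 ∂μ := by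
  have hdecomp := integral_sub_average_sq_add hf 0
  simp only [sub_zero] at hdecomp
  have hmean : μ.real univ * ⨍ y, f y ∂μ = ∫ x, f x ∂μ := measure_smul_average μ f
  calc (∫ x, f x ∂μ) ^ 2 = μ.real univ * (μ.real univ * (⨍ y, f y ∂μ) ^ 2) := by
        rw [← hmean]
        ring
    _ ≤ μ.real univ * ∫ x, f x ^ 2 ∂μ := by
        rw [← hdecomp]
        gcongr
        exact le_add_of_nonneg_left (by positivity)

end SquareMean

theorem norm_sq_le_sum_sq_single {ι : Type*} [Fintype ι] [DecidableEq ι]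
    (A : EuclideanSpace ℝ ι →L[ℝ] ℝ) : ‖A‖ ^ 2 ≤ ∑ i, A (EuclideanSpace.single i 1) ^ 2 := by
  have hA : ‖A‖ ≤ √(∑ i, A (EuclideanSpace.single i 1) ^ 2) := by
    refine A.opNorm_le_bound (Real.sqrt_nonneg _) fun v => ?_
    rw [apply_eq_sum_single, Real.norm_eq_abs, mul_comm]
    refine Real.abs_le_sqrt (Finset.sum_mul_sq_le_sq_mul_sq _ _ _) |>.trans_eq ?_
    rw [← EuclideanSpace.real_norm_sq_eq, Real.sqrt_mul (sq_nonneg _), Real.sqrt_sq (norm_nonneg _)]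
  exact (Real.le_sqrt (norm_nonneg _) (by positivity)).1 hA

section Pairing

variable {E : Type*} [NormedAddCommGroup E] [NormedSpace ℝ E] [FiniteDimensional ℝ E]
  [MeasurableSpace E] [BorelSpace E] {μ : Measure E} [μ.IsAddHaarMeasure]

theorem sq_integral_mul_fderiv_le {w : E → ℝ} {L : ℝ≥0} (hw : LipschitzWith L w) {K : Set E}
    (hK : IsCompact K) (hwK : ∀ x ∉ K, w x = 0) {f : E → ℝ} (hf : ContDiff ℝ 1 f)
    (hfc : HasCompactSupport f) (v : E) :
    (∫ x, w x * fderiv ℝ f x v ∂μ) ^ 2 ≤ (L * ‖v‖) ^ 2 * μ.real K * ∫ x in K, f x ^ 2 ∂μ := by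
  obtain ⟨L', hL'⟩ := hf.lipschitzWith_of_hasCompactSupport hfc one_ne_zero
  have hbound (x : E) : ‖lineDeriv ℝ w x (-v)‖ ≤ L * ‖v‖ :=
    (norm_lineDeriv_le_of_lipschitz ℝ hw).trans_eq (by rw [norm_neg])
  have hzero (x : E) (hx : x ∉ K) : lineDeriv ℝ w x (-v) * f x = 0 := by
    have hw0 : w =ᶠ[nhds x] fun _ => 0 :=
      Filter.mem_of_superset (hK.isClosed.isOpen_compl.mem_nhds hx) fun y hy => hwK y hy
    rw [hw0.lineDeriv_eq]
    simp only [lineDeriv, deriv_const, zero_mul]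
  have hparts : ∫ x, w x * fderiv ℝ f x v ∂μ = ∫ x in K, lineDeriv ℝ w x (-v) * f x ∂μ := by
    rw [setIntegral_eq_integral_of_forall_compl_eq_zero hzero,
      ← hL'.integral_lineDeriv_mul_eq hw (HasCompactSupport.intro hK hwK)]
    simp only [(hf.differentiable one_ne_zero _).lineDeriv_eq_fderiv, mul_comm]
  have hmeas : AEStronglyMeasurable (fun x => lineDeriv ℝ w x (-v)) (μ.restrict K) :=
    (measurable_lineDeriv hw.continuous).aestronglyMeasurable
  have hf₂ : MemLp f 2 (μ.restrict K) := (hf.continuous.memLp_of_hasCompactSupport hfc).restrict K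
  have : IsFiniteMeasure (μ.restrict K) := isFiniteMeasure_restrict.2 hK.measure_lt_top.ne
  have hprod : MemLp (fun x => lineDeriv ℝ w x (-v) * f x) 2 (μ.restrict K) :=
    hf₂.mul (memLp_top_of_bound hmeas _ (.of_forall hbound))
  calc (∫ x, w x * fderiv ℝ f x v ∂μ) ^ 2
      ≤ μ.real K * ∫ x in K, (lineDeriv ℝ w x (-v) * f x) ^ 2 ∂μ := by
        simpa only [hparts, measureReal_restrict_apply_univ] using sq_integral_le hprod
    _ ≤ μ.real K * ∫ x in K, (L * ‖v‖) ^ 2 * f x ^ 2 ∂μ := by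
        refine mul_le_mul_of_nonneg_left (integral_mono hprod.integrable_sq
          (hf₂.integrable_sq.const_mul _) fun x => ?_) measureReal_nonneg
        rw [mul_pow, ← sq_abs (lineDeriv ℝ w x (-v))]
        exact mul_le_mul_of_nonneg_right
          (pow_le_pow_left₀ (abs_nonneg _) (hbound x) 2) (sq_nonneg _)
    _ = (L * ‖v‖) ^ 2 * μ.real K * ∫ x in K, f x ^ 2 ∂μ := by
        rw [integral_const_mul]
        ring

end Pairing

section Convolution

variable {E : Type*} [NormedAddCommGroup E] [NormedSpace ℝ E] [FiniteDimensional ℝ E]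
  [MeasurableSpace E] [BorelSpace E] {μ : Measure E} [μ.IsAddHaarMeasure]

theorem fderiv_convolution_lsmul_apply {φ s : E → ℝ} (hφ : Continuous φ) (hs : ContDiff ℝ 1 s)
    (hsc : HasCompactSupport s) (x v : E) :
    fderiv ℝ (φ ⋆[ContinuousLinearMap.lsmul ℝ ℝ, μ] s) x v =
      ∫ y, φ (x - y) * fderiv ℝ s y v ∂μ := by
  rw [(hsc.hasFDerivAt_convolution_right _ hφ.locallyIntegrable hs x).fderiv,
    convolution_precompR_apply _ hφ.locallyIntegrable (hsc.fderiv ℝ)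
      (hs.continuous_fderiv one_ne_zero), convolution_lsmul_swap]
  rfl

end Convolution

section Mollification

variable {ι : Type*} [Fintype ι] [DecidableEq ι]

theorem sq_integral_mul_divergence_le {w : EuclideanSpace ℝ ι → ℝ} {L : ℝ≥0}
    (hw : LipschitzWith L w) {K : Set (EuclideanSpace ℝ ι)} (hK : IsCompact K)
    (hwK : ∀ x ∉ K, w x = 0) {F : ι → EuclideanSpace ℝ ι → ℝ} (hF : ∀ j, ContDiff ℝ 1 (F j))
    (hFc : ∀ j, HasCompactSupport (F j)) :
    (∫ x, w x * divergence F x) ^ 2 ≤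
      Fintype.card ι * (L ^ 2 * volume.real K * ∑ j, ∫ x in K, F j x ^ 2) := by
  have hint (j : ι) : Integrable fun x => w x * fderiv ℝ (F j) x (EuclideanSpace.single j 1) := by
    have := hw.continuous
    exact (by fun_prop (disch := exact one_ne_zero) : Continuous _).integrable_of_hasCompactSupport
      ((hFc j).fderiv_apply ℝ _).mul_left
  simp only [divergence, Finset.mul_sum]
  rw [integral_finsetSum _ fun j _ => hint j]
  refine sq_sum_le_card_mul_sum_sq.trans ?_
  rw [← Finset.mul_sum, Finset.card_univ]
  gcongr with j
  simpa using sq_integral_mul_fderiv_le hw hK hwK (hF j) (hFc j) (EuclideanSpace.single j 1)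

/-- The gradient of the scalar field `s` is on `U` the row-wise divergence of the matrix field `q`,
as in the contracted Bianchi identity `ds = -6 δz` with `q = -6 z`. -/
def GradEqDivergenceOn (s : EuclideanSpace ℝ ι → ℝ) (q : ι → ι → EuclideanSpace ℝ ι → ℝ)
    (U : Set (EuclideanSpace ℝ ι)) : Prop :=
  ∀ x ∈ U, ∀ i, fderiv ℝ s x (EuclideanSpace.single i 1) = divergence (q i) x

theorem norm_fderiv_convolution_sq_le {φ s : EuclideanSpace ℝ ι → ℝ}
    {q : ι → ι → EuclideanSpace ℝ ι → ℝ} {L : ℝ≥0} (hφ : LipschitzWith L φ) {δ : ℝ}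
    (hφδ : ∀ y ∉ closedBall 0 δ, φ y = 0) (hs : ContDiff ℝ 1 s) (hsc : HasCompactSupport s)
    (hq : ∀ i j, ContDiff ℝ 1 (q i j)) (hqc : ∀ i j, HasCompactSupport (q i j))
    {x : EuclideanSpace ℝ ι} (h : GradEqDivergenceOn s q (closedBall x δ)) :
    ‖fderiv ℝ (φ ⋆[ContinuousLinearMap.lsmul ℝ ℝ] s) x‖ ^ 2 ≤
      Fintype.card ι * (L ^ 2 * volume.real (closedBall x δ)) *
        ∑ i, ∑ j, ∫ y in closedBall x δ, q i j y ^ 2 := by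
  have hzero (y : EuclideanSpace ℝ ι) (hy : y ∉ closedBall x δ) : φ (x - y) = 0 := by
    refine hφδ _ fun hxy => hy ?_
    rwa [mem_closedBall_zero_iff, norm_sub_rev, ← mem_closedBall_iff_norm] at hxy
  have hw : LipschitzWith L fun y => φ (x - y) := by
    refine .of_dist_le_mul fun y z => ?_
    simpa only [dist_sub_left] using hφ.dist_le_mul (x - y) (x - z)
  refine (norm_sq_le_sum_sq_single _).trans ?_
  rw [Finset.mul_sum]
  refine Finset.sum_le_sum fun i _ => ?_
  have hdiv : ∫ y, φ (x - y) * fderiv ℝ s y (EuclideanSpace.single i 1) =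
      ∫ y, φ (x - y) * divergence (q i) y := by
    congr with y
    by_cases hy : y ∈ closedBall x δ
    · rw [h y hy i]
    · rw [hzero y hy, zero_mul, zero_mul]
  rw [fderiv_convolution_lsmul_apply hφ.continuous hs hsc, hdiv]
  exact (sq_integral_mul_divergence_le hw (isCompact_closedBall x δ) hzero (hq i)
    (hqc i)).trans_eq (by ring)

theorem sub_convolution_eq_sum_dilationAverage_divergence {φ s : EuclideanSpace ℝ ι → ℝ}
    {q : ι → ι → EuclideanSpace ℝ ι → ℝ} (hφ : Continuous φ) (hφc : HasCompactSupport φ)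
    (hφ₁ : ∫ y, φ y = 1) {δ : ℝ} (hφδ : ∀ y ∉ closedBall 0 δ, φ y = 0) (hs : ContDiff ℝ 1 s)
    (hsc : HasCompactSupport s) {x : EuclideanSpace ℝ ι}
    (h : GradEqDivergenceOn s q (closedBall x δ)) :
    s x - (φ ⋆[ContinuousLinearMap.lsmul ℝ ℝ] s) x =
      ∑ i, dilationAverage (fun y => φ y * y i) (divergence (q i)) x := by
  rw [← sum_dilationAverage_fderiv hφ hφc hφ₁ hs hsc]
  refine Finset.sum_congr rfl fun i _ => ?_
  have hIoc : ∀ᵐ p : ℝ × EuclideanSpace ℝ ι ∂(volume.restrict (Ioc (0 : ℝ) 1)).prod volume,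
      p.1 ∈ Ioc (0 : ℝ) 1 :=
    Measure.quasiMeasurePreserving_fst.ae (ae_restrict_mem measurableSet_Ioc)
  refine integral_congr_ae (hIoc.mono fun p hp => ?_)
  by_cases hy : p.2 ∈ closedBall (0 : EuclideanSpace ℝ ι) δ
  · have hmem : x - p.1 • p.2 ∈ closedBall x δ := by
      rw [mem_closedBall_zero_iff] at hy
      rw [mem_closedBall, dist_self_sub_left, norm_smul, Real.norm_of_nonneg hp.1.le]
      exact (mul_le_of_le_one_left (norm_nonneg _) hp.2).trans hy
    simp only [h _ hmem i]
  · simp only [hφδ _ hy, zero_mul, zero_smul]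

theorem exists_setIntegral_sub_convolution_sq_le {φ : EuclideanSpace ℝ ι → ℝ}
    (hφ : ContDiff ℝ ∞ φ) (hφc : HasCompactSupport φ) (hφ₁ : ∫ y, φ y = 1) {δ : ℝ}
    (hφδ : ∀ y ∉ closedBall 0 δ, φ y = 0) {U : Set (EuclideanSpace ℝ ι)} (hU : MeasurableSet U) :
    ∃ C, ∀ (s : EuclideanSpace ℝ ι → ℝ) (q : ι → ι → EuclideanSpace ℝ ι → ℝ), ContDiff ℝ 1 s →
      HasCompactSupport s → (∀ i j, ContDiff ℝ 1 (q i j)) → (∀ i j, HasCompactSupport (q i j)) →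
      GradEqDivergenceOn s q (cthickening δ U) →
      ∫ x in U, (s x - (φ ⋆[ContinuousLinearMap.lsmul ℝ ℝ] s) x) ^ 2 ≤
        C * ∑ i, ∑ j, ∫ x, q i j x ^ 2 := by
  have hψ (i : ι) : ContDiff ℝ ∞ fun y : EuclideanSpace ℝ ι => φ y * y i := by fun_prop
  choose C hC using fun i => exists_integral_dilationAverage_divergence_sq_le (hψ i) hφc.mul_right
  refine ⟨Fintype.card ι * ∑ i, |C i|, fun s q hs hsc hq hqc h => ?_⟩
  set A : ι → EuclideanSpace ℝ ι → ℝ := fun i =>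
    dilationAverage (fun y => φ y * y i) (divergence (q i))
  have hA (i : ι) : Integrable fun x => A i x ^ 2 := by
    refine (memLp_dilationAverage ((hψ i).continuous.integrable_of_hasCompactSupport hφc.mul_right)
      (continuous_divergence (hq i)) (hasCompactSupport_divergence (hqc i))).integrable_sq
  have hsum : Integrable fun x => Fintype.card ι * ∑ i, A i x ^ 2 :=
    (integrable_finsetSum _ fun i _ => hA i).const_mul _
  calc ∫ x in U, (s x - (φ ⋆[ContinuousLinearMap.lsmul ℝ ℝ] s) x) ^ 2
      = ∫ x in U, (∑ i, A i x) ^ 2 := setIntegral_congr_fun hU fun x hx => congrArg (· ^ 2) <|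
        sub_convolution_eq_sum_dilationAverage_divergence hφ.continuous hφc hφ₁ hφδ hs hsc
          fun y hy => h y (closedBall_subset_cthickening hx δ hy)
    _ ≤ ∫ x in U, Fintype.card ι * ∑ i, A i x ^ 2 :=
        integral_mono_of_nonneg (.of_forall fun x => sq_nonneg _) hsum.integrableOn
          (.of_forall fun x => sq_sum_le_card_mul_sum_sq)
    _ ≤ ∫ x, Fintype.card ι * ∑ i, A i x ^ 2 :=
        setIntegral_le_integral hsum (.of_forall fun x => by positivity)
    _ = Fintype.card ι * ∑ i, ∫ x, A i x ^ 2 := by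
        rw [integral_const_mul, integral_finsetSum _ fun i _ => hA i]
    _ ≤ Fintype.card ι * ∑ i, (∑ k, |C k|) * ∑ j, ∫ x, q i j x ^ 2 := by
        gcongr with i
        refine (hC i (q i) (hq i) (hqc i)).trans ?_
        gcongr
        exact (le_abs_self _).trans
          (Finset.single_le_sum (fun k _ => abs_nonneg (C k)) (Finset.mem_univ i))
    _ = Fintype.card ι * (∑ i, |C i|) * ∑ i, ∑ j, ∫ x, q i j x ^ 2 := by
        rw [← Finset.mul_sum, mul_assoc]

theorem exists_convolution_sub_sq_le {φ : EuclideanSpace ℝ ι → ℝ}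
    (hφ : ContDiff ℝ ∞ φ) (hφc : HasCompactSupport φ) {δ : ℝ}
    (hφδ : ∀ y ∉ closedBall 0 δ, φ y = 0) {U : Set (EuclideanSpace ℝ ι)} (hU : Convex ℝ U) :
    ∃ C, 0 ≤ C ∧ ∀ (s : EuclideanSpace ℝ ι → ℝ) (q : ι → ι → EuclideanSpace ℝ ι → ℝ),
      ContDiff ℝ 1 s → HasCompactSupport s →
      (∀ i j, ContDiff ℝ 1 (q i j)) → (∀ i j, HasCompactSupport (q i j)) →
      GradEqDivergenceOn s q (cthickening δ U) → ∀ x ∈ U, ∀ y ∈ U,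
      ((φ ⋆[ContinuousLinearMap.lsmul ℝ ℝ] s) x - (φ ⋆[ContinuousLinearMap.lsmul ℝ ℝ] s) y) ^ 2 ≤
        C * (∑ i, ∑ j, ∫ x, q i j x ^ 2) * ‖x - y‖ ^ 2 := by
  obtain ⟨L, hL⟩ := hφ.lipschitzWith_of_hasCompactSupport hφc (by simp)
  set C : ℝ := Fintype.card ι * (L ^ 2 * volume.real (closedBall (0 : EuclideanSpace ℝ ι) δ))
  refine ⟨C, by positivity, fun s q hs hsc hq hqc h x hx y hy => ?_⟩
  set Q : ℝ := ∑ i, ∑ j, ∫ x, q i j x ^ 2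
  have : 0 ≤ Q := by positivity
  have hgrad (x : EuclideanSpace ℝ ι) (hx : x ∈ U) :
      ‖fderiv ℝ (φ ⋆[ContinuousLinearMap.lsmul ℝ ℝ] s) x‖ ≤ √(C * Q) := by
    refine Real.le_sqrt_of_sq_le ((norm_fderiv_convolution_sq_le hL hφδ hs hsc hq hqc
      fun y hy => h y (closedBall_subset_cthickening hx δ hy)).trans ?_)
    rw [Measure.addHaar_real_closedBall_center]
    refine mul_le_mul_of_nonneg_left (Finset.sum_le_sum fun i _ => Finset.sum_le_sum fun j _ => ?_)
      (by positivity)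
    exact setIntegral_le_integral ((hq i j).continuous.memLp_of_hasCompactSupport
      (hqc i j)).integrable_sq (.of_forall fun _ => sq_nonneg _)
  have hdiff : Differentiable ℝ (φ ⋆[ContinuousLinearMap.lsmul ℝ ℝ] s) :=
    (hsc.contDiff_convolution_right (n := 1) _ hφ.continuous.locallyIntegrable hs).differentiable
      one_ne_zero
  have hlip := hU.norm_image_sub_le_of_norm_fderiv_le (fun z _ => hdiff z) hgrad hy hx
  calc _ ≤ (√(C * Q) * ‖x - y‖) ^ 2 := sq_le_sq' (abs_le.1 hlip).1 (abs_le.1 hlip).2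
    _ = C * Q * ‖x - y‖ ^ 2 := by rw [mul_pow, Real.sq_sqrt (by positivity)]

theorem exists_setIntegral_sub_average_sq_le {U : Set (EuclideanSpace ℝ ι)} (hU : Convex ℝ U)
    (hUb : Bornology.IsBounded U) (hUm : MeasurableSet U) {δ : ℝ} (hδ : 0 < δ) :
    ∃ C, ∀ (s : EuclideanSpace ℝ ι → ℝ) (q : ι → ι → EuclideanSpace ℝ ι → ℝ), ContDiff ℝ 1 s →
      HasCompactSupport s → (∀ i j, ContDiff ℝ 1 (q i j)) → (∀ i j, HasCompactSupport (q i j)) →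
      GradEqDivergenceOn s q (cthickening δ U) →
      ∫ x in U, (s x - ⨍ y in U, s y) ^ 2 ≤ C * ∑ i, ∑ j, ∫ x, q i j x ^ 2 := by
  obtain rfl | ⟨y, hy⟩ := U.eq_empty_or_nonempty
  · exact ⟨0, by simp⟩
  let b : ContDiffBump (0 : EuclideanSpace ℝ ι) := ⟨δ / 2, δ, half_pos hδ, half_lt_self hδ⟩
  set φ := b.normed volume
  have hφ : ContDiff ℝ ∞ φ := b.contDiff_normed
  have hφc : HasCompactSupport φ := b.hasCompactSupport_normed
  have hφδ (x : EuclideanSpace ℝ ι) (hx : x ∉ closedBall 0 δ) : φ x = 0 :=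
    image_eq_zero_of_notMem_tsupport (by rwa [b.tsupport_normed_eq])
  obtain ⟨C₁, hC₁⟩ := exists_setIntegral_sub_convolution_sq_le hφ hφc b.integral_normed hφδ hUm
  obtain ⟨C₂, hC₂0, hC₂⟩ := exists_convolution_sub_sq_le hφ hφc hφδ hU
  refine ⟨2 * C₁ + 2 * (C₂ * diam U ^ 2 * volume.real U), fun s q hs hsc hq hqc h => ?_⟩
  have : IsFiniteMeasure (volume.restrict U) := isFiniteMeasure_restrict.2 hUb.measure_lt_top.ne
  set Q : ℝ := ∑ i, ∑ j, ∫ x, q i j x ^ 2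
  set m := φ ⋆[ContinuousLinearMap.lsmul ℝ ℝ] s
  have hs₂ : MemLp s 2 (volume.restrict U) :=
    (hs.continuous.memLp_of_hasCompactSupport hsc).restrict U
  have hm : MemLp m 2 (volume.restrict U) :=
    ((hsc.continuous_convolution_right _ hφ.continuous.locallyIntegrable
      hs.continuous).memLp_of_hasCompactSupport (hφc.convolution _ hsc)).restrict U
  have hosc : ∀ᵐ x ∂volume.restrict U,
      (s x - m y) ^ 2 ≤ 2 * (s x - m x) ^ 2 + 2 * (C₂ * Q * diam U ^ 2) := by
    refine (ae_restrict_mem hUm).mono fun x hx => ?_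
    have hmx : (m x - m y) ^ 2 ≤ C₂ * Q * diam U ^ 2 := by
      refine (hC₂ s q hs hsc hq hqc h x hx y hy).trans ?_
      gcongr
      exact (dist_eq_norm x y).symm.trans_le (dist_le_diam_of_mem hUb hx hy)
    nlinarith [sq_nonneg (s x - m x - (m x - m y))]
  have hsm : Integrable (fun x => 2 * (s x - m x) ^ 2) (volume.restrict U) :=
    (hs₂.sub hm).integrable_sq.const_mul 2
  calc ∫ x in U, (s x - ⨍ y in U, s y) ^ 2 ≤ ∫ x in U, (s x - m y) ^ 2 :=
        integral_sub_average_sq_le hs₂ _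
    _ ≤ ∫ x in U, 2 * (s x - m x) ^ 2 + 2 * (C₂ * Q * diam U ^ 2) :=
        integral_mono_ae (hs₂.sub (memLp_const _)).integrable_sq
          (hsm.add (integrable_const _)) hosc
    _ = 2 * (∫ x in U, (s x - m x) ^ 2) + volume.real U * (2 * (C₂ * Q * diam U ^ 2)) := by
        rw [integral_add hsm (integrable_const _), integral_const_mul, setIntegral_const,
          smul_eq_mul]
    _ ≤ _ := by linear_combination 2 * hC₁ s q hs hsc hq hqc h

end Mollification

theorem exists_lipschitzWith_mul {E : Type*} [PseudoMetricSpace E] {w f : E → ℝ} {L L' : ℝ≥0}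
    (hw : LipschitzWith L w) (hwc : HasCompactSupport w) (hf : LipschitzWith L' f) :
    ∃ K, LipschitzWith K fun x => w x * f x := by
  obtain ⟨B, hB⟩ := hwc.exists_bound_of_continuous hw.continuous
  obtain ⟨D₀, hD₀⟩ := hwc.isCompact.exists_bound_of_continuousOn hf.continuous.continuousOn
  obtain ⟨D, hD0, hD⟩ : ∃ D ≥ 0, ∀ x ∈ tsupport w, |f x| ≤ D :=
    ⟨|D₀|, abs_nonneg D₀, fun x hx => (hD₀ x hx).trans (le_abs_self D₀)⟩
  have hmul (x y : E) (hy : y ∈ tsupport w) :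
      dist (w x * f x) (w y * f y) ≤ (B * L' + L * D) * dist x y := by
    calc dist (w x * f x) (w y * f y) = |w x * (f x - f y) + (w x - w y) * f y| := by
          rw [Real.dist_eq]
          ring_nf
      _ ≤ |w x| * |f x - f y| + |w x - w y| * |f y| := by
          simpa only [abs_mul] using abs_add_le (w x * (f x - f y)) ((w x - w y) * f y)
      _ ≤ B * (L' * dist x y) + L * dist x y * D := by
          have := (norm_nonneg _).trans (hB x)
          gcongr
          exacts [hB x, hf.dist_le_mul x y, hw.dist_le_mul x y, hD y hy]
      _ = (B * L' + L * D) * dist x y := by ring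
  refine ⟨_, .of_dist_le' (K := B * L' + L * D) fun x y => ?_⟩
  by_cases hy : y ∈ tsupport w
  · exact hmul x y hy
  by_cases hx : x ∈ tsupport w
  · simpa only [dist_comm] using hmul y x hx
  · have := (norm_nonneg _).trans (hB x)
    rw [image_eq_zero_of_notMem_tsupport hx, image_eq_zero_of_notMem_tsupport hy, zero_mul,
      zero_mul, dist_self]
    positivity

section ConcentricBalls

variable {E : Type*} [NormedAddCommGroup E] [NormedSpace ℝ E]

/-- The function `t⁻ⁿ⁻¹` on the ball of radius `t` in dimension `n`, extended by zero. The factor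
`t⁻ⁿ` comes from the substitution `x = t y`, and `t⁻¹` from writing `y = t⁻¹ x`. -/
noncomputable def radialKernel (t : ℝ) (x : E) : ℝ :=
  (ball 0 t).indicator (fun _ => (t ^ (Module.finrank ℝ E + 1))⁻¹) x

/-- The weight `w` for which `-w(x) x` is the radial field whose divergence is the difference of the
uniform densities on `ball 0 R` and `ball 0 r`, up to the volume of the unit ball. It is constant on
`ball 0 r`. -/
noncomputable def radialWeight (r R : ℝ) (x : E) : ℝ :=
  ∫ t in Ioc r R, radialKernel t x

theorem radialWeight_eq_setIntegral (r R : ℝ) (x : E) :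
    radialWeight r R x = ∫ t in Ioc r R ∩ Ioi ‖x‖, (t ^ (Module.finrank ℝ E + 1))⁻¹ := by
  rw [radialWeight, ← setIntegral_indicator measurableSet_Ioi]
  refine integral_congr_ae (.of_forall fun t => ?_)
  by_cases ht : ‖x‖ < t <;> simp [radialKernel, ht]

theorem radialWeight_eq_zero {r R : ℝ} {x : E} (hx : x ∉ ball 0 R) : radialWeight r R x = 0 := by
  rw [mem_ball_zero_iff, not_lt] at hx
  have hempty : Ioc r R ∩ Ioi ‖x‖ = ∅ :=
    eq_empty_of_forall_notMem fun t ht => (ht.1.2.trans hx).not_gt ht.2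
  rw [radialWeight_eq_setIntegral, hempty, setIntegral_empty]

theorem lipschitzWith_radialWeight {r : ℝ} (hr : 0 < r) (R : ℝ) :
    LipschitzWith (r ^ (Module.finrank ℝ E + 1))⁻¹.toNNReal (radialWeight r R : E → ℝ) := by
  set n := Module.finrank ℝ E + 1
  have hbound (t : ℝ) (ht : t ∈ Ioc r R) : ‖(t ^ n)⁻¹‖ ≤ (r ^ n)⁻¹ := by
    have := hr.trans ht.1
    rw [Real.norm_of_nonneg (by positivity)]
    gcongr
    exact ht.1.le
  have hint : IntegrableOn (fun t : ℝ => (t ^ n)⁻¹) (Ioc r R) :=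
    Measure.integrableOn_of_bounded measure_Ioc_lt_top.ne (by fun_prop)
      ((ae_restrict_mem measurableSet_Ioc).mono hbound)
  refine .of_dist_le_mul fun x y => ?_
  wlog hxy : ‖x‖ ≤ ‖y‖ generalizing x y
  · simpa only [dist_comm] using this y x (le_of_not_ge hxy)
  have hsub : (Ioc r R ∩ Ioi ‖x‖) \ (Ioc r R ∩ Ioi ‖y‖) ⊆ Ioc ‖x‖ ‖y‖ := fun t ht =>
    ⟨ht.1.2, not_lt.1 fun hty => ht.2 ⟨ht.1.1, hty⟩⟩
  rw [dist_eq_norm, radialWeight_eq_setIntegral, radialWeight_eq_setIntegral,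
    ← setIntegral_sdiff (by measurability) (hint.mono_set inter_subset_left)
      (inter_subset_inter_right _ (Ioi_subset_Ioi hxy)), Real.coe_toNNReal _ (by positivity)]
  calc _ ≤ (r ^ n)⁻¹ * volume.real ((Ioc r R ∩ Ioi ‖x‖) \ (Ioc r R ∩ Ioi ‖y‖)) :=
        norm_setIntegral_le_of_norm_le_const ((measure_mono hsub).trans_lt measure_Ioc_lt_top)
          fun t ht => hbound t ht.1.1
    _ ≤ (r ^ n)⁻¹ * volume.real (Ioc ‖x‖ ‖y‖) := by
        gcongr
        exact measure_Ioc_lt_top.ne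
    _ ≤ (r ^ n)⁻¹ * dist x y := by
        gcongr
        rw [Real.volume_real_Ioc_of_le hxy, dist_comm, dist_eq_norm]
        exact norm_sub_norm_le y x

variable [FiniteDimensional ℝ E] [MeasurableSpace E] [BorelSpace E] (μ : Measure E)
  [μ.IsAddHaarMeasure]

theorem setAverage_comp_smul_of_pos {F : Type*} [NormedAddCommGroup F] [NormedSpace ℝ F]
    (f : E → F) {R : ℝ} (hR : 0 < R) (S : Set E) :
    ⨍ x in S, f (R • x) ∂μ = ⨍ x in R • S, f x ∂μ := by
  rw [setAverage_eq, setAverage_eq, Measure.setIntegral_comp_smul_of_pos μ f S hR, smul_smul,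
    measureReal_def, measureReal_def, Measure.addHaar_smul, ENNReal.toReal_mul,
    ENNReal.toReal_ofReal (abs_nonneg _), abs_of_pos (by positivity), mul_inv, mul_comm]

theorem integrable_radialKernel_mul {r : ℝ} (hr : 0 < r) (R : ℝ) {g : E → ℝ}
    (hg : Integrable g μ) :
    Integrable (fun p : ℝ × E => radialKernel p.1 p.2 * g p.2)
      ((volume.restrict (Ioc r R)).prod μ) := by
  have hIoc : ∀ᵐ p : ℝ × E ∂(volume.restrict (Ioc r R)).prod μ, p.1 ∈ Ioc r R :=
    Measure.quasiMeasurePreserving_fst.ae (ae_restrict_mem measurableSet_Ioc)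
  have hmeas : Measurable fun p : ℝ × E => radialKernel p.1 p.2 :=
    (by fun_prop : Measurable fun p : ℝ × E => (p.1 ^ (Module.finrank ℝ E + 1))⁻¹).indicator
      (measurableSet_lt (measurable_snd.dist measurable_const) measurable_fst)
  refine (hg.comp_snd _).bdd_mul (c := (r ^ (Module.finrank ℝ E + 1))⁻¹)
    hmeas.aestronglyMeasurable (hIoc.mono fun p hp => ?_)
  refine (norm_indicator_le_norm_self _ _).trans ?_
  have := hr.trans hp.1
  rw [Real.norm_of_nonneg (by positivity)]
  gcongr
  exact hp.1.le

theorem setIntegral_unitBall_fderiv_smul (s : E → ℝ) {t : ℝ} (ht : 0 < t) :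
    ∫ y in ball 0 1, fderiv ℝ s (t • y) y ∂μ = ∫ x, radialKernel t x * fderiv ℝ s x x ∂μ := by
  have hrescale (y : E) : fderiv ℝ s (t • y) y = t⁻¹ * fderiv ℝ s (t • y) (t • y) := by
    rw [map_smul, smul_eq_mul, inv_mul_cancel_left₀ ht.ne']
  have hball (x : E) : radialKernel t x * fderiv ℝ s x x =
      (t ^ (Module.finrank ℝ E + 1))⁻¹ * (ball 0 t).indicator (fun x => fderiv ℝ s x x) x := by
    by_cases hx : ‖x‖ < t <;> simp [radialKernel, hx]
  simp only [hrescale, hball]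
  rw [integral_const_mul, integral_const_mul, integral_indicator measurableSet_ball,
    Measure.setIntegral_comp_smul_of_pos μ (fun x => fderiv ℝ s x x) _ ht,
    smul_unitBall_of_pos ht, smul_eq_mul, pow_succ, mul_inv]
  ring

theorem setIntegral_unitBall_sub {r R : ℝ} (hr : 0 < r) (hrR : r ≤ R) {s : E → ℝ}
    (hs : ContDiff ℝ 1 s) (hsc : HasCompactSupport s) :
    ∫ y in ball 0 1, s (R • y) - s (r • y) ∂μ = ∫ x, radialWeight r R x * fderiv ℝ s x x ∂μ := by
  have hseg (y : E) : s (R • y) - s (r • y) = ∫ t in Ioc r R, fderiv ℝ s (t • y) y := by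
    simpa only [zero_add, intervalIntegral.integral_of_le hrR] using
      (integral_fderiv_segment hs 0 y r R).symm
  have hcont : Continuous fun p : E × ℝ => fderiv ℝ s (p.2 • p.1) p.1 := by
    fun_prop (disch := exact one_ne_zero)
  have hint : Integrable (fun p : E × ℝ => fderiv ℝ s (p.2 • p.1) p.1)
      ((μ.restrict (ball 0 1)).prod (volume.restrict (Ioc r R))) := by
    rw [Measure.prod_restrict]
    exact (hcont.continuousOn.integrableOn_compact
      ((isCompact_closedBall 0 1).prod isCompact_Icc)).mono_set
      (prod_mono ball_subset_closedBall Ioc_subset_Icc_self)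
  have hg : Integrable (fun x => fderiv ℝ s x x) μ :=
    (by fun_prop (disch := exact one_ne_zero) : Continuous _).integrable_of_hasCompactSupport
      ((hsc.fderiv ℝ).mono fun x hx hx0 => hx (by simp [hx0]))
  calc ∫ y in ball 0 1, s (R • y) - s (r • y) ∂μ
      = ∫ y in ball 0 1, (∫ t in Ioc r R, fderiv ℝ s (t • y) y) ∂μ := by simp only [hseg]
    _ = ∫ t in Ioc r R, (∫ y in ball 0 1, fderiv ℝ s (t • y) y ∂μ) := integral_integral_swap hint
    _ = ∫ t in Ioc r R, (∫ x, radialKernel t x * fderiv ℝ s x x ∂μ) :=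
        setIntegral_congr_fun measurableSet_Ioc fun t ht =>
          setIntegral_unitBall_fderiv_smul μ s (hr.trans ht.1)
    _ = ∫ x, radialWeight r R x * fderiv ℝ s x x ∂μ := by
        rw [integral_integral_swap (integrable_radialKernel_mul μ hr R hg)]
        simp only [radialWeight, integral_mul_const]

theorem ball_ae_eq_closedBall (x : E) {R : ℝ} (hR : 0 < R) : ball x R =ᵐ[μ] closedBall x R := by
  refine ae_eq_of_subset_of_measure_ge ball_subset_closedBall ?_
    measurableSet_ball.nullMeasurableSet measure_closedBall_lt_top.ne
  rw [Measure.addHaar_closedBall μ x hR.le, Measure.addHaar_ball_of_pos μ x hR]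

theorem average_ball_sub {r R : ℝ} (hr : 0 < r) (hrR : r ≤ R) {s : E → ℝ} (hs : ContDiff ℝ 1 s)
    (hsc : HasCompactSupport s) :
    (⨍ x in ball 0 R, s x ∂μ) - ⨍ x in ball 0 r, s x ∂μ =
      (μ.real (ball 0 1))⁻¹ * ∫ x, radialWeight r R x * fderiv ℝ s x x ∂μ := by
  have hR : 0 < R := hr.trans_le hrR
  have hint (t : ℝ) : IntegrableOn (fun y => s (t • y)) (ball 0 1) μ := by
    have := hs.continuous
    exact ((by fun_prop : Continuous _).continuousOn.integrableOn_compact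
      (isCompact_closedBall 0 1)).mono_set ball_subset_closedBall
  rw [← smul_unitBall_of_pos hR, ← smul_unitBall_of_pos hr, ← setAverage_comp_smul_of_pos μ s hR,
    ← setAverage_comp_smul_of_pos μ s hr, ← setIntegral_unitBall_sub μ hr hrR hs hsc, setAverage_eq,
    setAverage_eq, ← smul_sub, ← integral_sub (hint R) (hint r), smul_eq_mul]

variable {ι : Type*} [Fintype ι] [DecidableEq ι]

theorem exists_average_ball_sub_sq_le {r R : ℝ} (hr : 0 < r) (hrR : r ≤ R) :
    ∃ C, ∀ (s : EuclideanSpace ℝ ι → ℝ) (q : ι → ι → EuclideanSpace ℝ ι → ℝ), ContDiff ℝ 1 s →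
      HasCompactSupport s → (∀ i j, ContDiff ℝ 1 (q i j)) → (∀ i j, HasCompactSupport (q i j)) →
      GradEqDivergenceOn s q (ball 0 R) →
      ((⨍ x in ball 0 R, s x) - ⨍ x in ball 0 r, s x) ^ 2 ≤
        C * ∑ i, ∑ j, ∫ x in ball 0 R, q i j x ^ 2 := by
  set w : EuclideanSpace ℝ ι → ℝ := radialWeight r R
  have hw := lipschitzWith_radialWeight (E := EuclideanSpace ℝ ι) hr R
  have hwR (x : EuclideanSpace ℝ ι) (hx : x ∉ closedBall 0 R) : w x = 0 :=
    radialWeight_eq_zero fun hxR => hx (ball_subset_closedBall hxR)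
  choose L hL using fun i => exists_lipschitzWith_mul hw
    (HasCompactSupport.intro (isCompact_closedBall 0 R) hwR)
    (EuclideanSpace.proj i : EuclideanSpace ℝ ι →L[ℝ] ℝ).lipschitz
  set A := (volume.real (ball (0 : EuclideanSpace ℝ ι) 1))⁻¹
  set B := volume.real (closedBall (0 : EuclideanSpace ℝ ι) R)
  refine ⟨A ^ 2 * (Fintype.card ι * (Fintype.card ι * ((∑ k, (L k : ℝ) ^ 2) * B))),
    fun s q hs hsc hq hqc h => ?_⟩
  have hint (i : ι) : Integrable fun x : EuclideanSpace ℝ ι => w x * x i * divergence (q i) x :=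
    ((hL i).continuous.mul (continuous_divergence (hq i))).integrable_of_hasCompactSupport
      (hasCompactSupport_divergence (hqc i)).mul_left
  have hdiv (x : EuclideanSpace ℝ ι) :
      w x * fderiv ℝ s x x = ∑ i, w x * x i * divergence (q i) x := by
    by_cases hx : x ∈ ball 0 R
    · simp only [apply_eq_sum_single (fderiv ℝ s x) x, h x hx, Finset.mul_sum, mul_assoc]
    · simp only [w, radialWeight_eq_zero hx, zero_mul, Finset.sum_const_zero]
  calc ((⨍ x in ball 0 R, s x) - ⨍ x in ball 0 r, s x) ^ 2
      = A ^ 2 * (∑ i, ∫ x, w x * x i * divergence (q i) x) ^ 2 := by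
        rw [average_ball_sub volume hr hrR hs hsc, mul_pow]
        simp only [A, w, hdiv, integral_finsetSum _ fun i _ => hint i]
    _ ≤ A ^ 2 * (Fintype.card ι * ∑ i, (∫ x, w x * x i * divergence (q i) x) ^ 2) := by
        gcongr
        exact sq_sum_le_card_mul_sum_sq
    _ ≤ A ^ 2 * (Fintype.card ι * ∑ i, Fintype.card ι * ((∑ k, (L k : ℝ) ^ 2) * B *
          ∑ j, ∫ x in ball 0 R, q i j x ^ 2)) := by
        gcongr with i
        refine (sq_integral_mul_divergence_le (hL i) (isCompact_closedBall 0 R)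
          (fun x hx => mul_eq_zero_of_left (hwR x hx) _) (hq i) (hqc i)).trans ?_
        simp only [← setIntegral_congr_set (ball_ae_eq_closedBall volume (0 : EuclideanSpace ℝ ι)
          (hr.trans_le hrR))]
        gcongr
        exact Finset.single_le_sum (fun k _ => sq_nonneg (L k : ℝ)) (Finset.mem_univ i)
    _ = _ := by
        simp only [← Finset.mul_sum]
        ring

end ConcentricBalls

section Cutoff

variable {E : Type*} [NormedAddCommGroup E] [NormedSpace ℝ E] [HasContDiffBump E] {c : E}
  (b : ContDiffBump c) {f : E → ℝ}

theorem contDiff_bump_mul {n : ℕ∞} {ρ : ℝ} (hb : b.rOut < ρ) (hf : ContDiffOn ℝ n f (ball c ρ)) :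
    ContDiff ℝ n fun x => b x * f x := by
  refine contDiff_iff_contDiffAt.2 fun x => ?_
  by_cases hx : x ∈ ball c ρ
  · exact b.contDiffAt.mul (hf.contDiffAt (isOpen_ball.mem_nhds hx))
  · have hxb : x ∉ tsupport b := fun hxb => hx (closedBall_subset_ball hb (b.tsupport_eq ▸ hxb))
    refine contDiffAt_const (c := 0) |>.congr_of_eventuallyEq ?_
    exact (notMem_tsupport_iff_eventuallyEq.1 hxb).mono fun y hy => mul_eq_zero_of_left hy _

theorem bump_mul_eqOn (f : E → ℝ) : EqOn (fun x => b x * f x) f (ball c b.rIn) := fun x hx => by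
  simp only [b.one_of_mem_closedBall (ball_subset_closedBall hx), one_mul]

theorem setIntegral_bump_mul_sq_le [MeasurableSpace E] {μ : Measure E}
    (hf : IntegrableOn (fun x => f x ^ 2) (ball c b.rOut) μ) :
    ∫ x, (b x * f x) ^ 2 ∂μ ≤ ∫ x in ball c b.rOut, f x ^ 2 ∂μ := by
  have hzero (x : E) (hx : x ∉ ball c b.rOut) : (b x * f x) ^ 2 = 0 := by
    rw [b.zero_of_le_dist (not_lt.1 hx), zero_mul, zero_pow two_ne_zero]
  rw [← setIntegral_eq_integral_of_forall_compl_eq_zero hzero]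
  refine integral_mono_of_nonneg (.of_forall fun x => sq_nonneg _) hf (.of_forall fun x => ?_)
  simp only [mul_pow]
  exact mul_le_of_le_one_left (sq_nonneg _) (pow_le_one₀ b.nonneg b.le_one)

end Cutoff

section Balls

variable {ι : Type*} [Fintype ι] [DecidableEq ι]

theorem GradEqDivergenceOn.congr {s s' : EuclideanSpace ℝ ι → ℝ}
    {q q' : ι → ι → EuclideanSpace ℝ ι → ℝ} {U : Set (EuclideanSpace ℝ ι)} (hU : IsOpen U)
    (h : GradEqDivergenceOn s q U) (hs : EqOn s' s U) (hq : ∀ i j, EqOn (q' i j) (q i j) U) :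
    GradEqDivergenceOn s' q' U := fun x hx i => by
  have hx := hU.mem_nhds hx
  rw [(hs.eventuallyEq_of_mem hx).fderiv_eq, h x (mem_of_mem_nhds hx) i]
  exact Finset.sum_congr rfl fun j _ => by rw [((hq i j).eventuallyEq_of_mem hx).fderiv_eq]

theorem memLp_restrict_ball {E : Type*} [NormedAddCommGroup E] [ProperSpace E]
    [MeasurableSpace E] [BorelSpace E] {μ : Measure E} [IsFiniteMeasureOnCompacts μ] {f : E → ℝ}
    {c : E} {R ρ : ℝ} (hf : ContinuousOn f (ball c ρ)) (hR : R < ρ) (p : ENNReal) :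
    MemLp f p (μ.restrict (ball c R)) := by
  have hf' : ContinuousOn f (closedBall c R) := hf.mono (closedBall_subset_ball hR)
  obtain ⟨M, hM⟩ := (isCompact_closedBall c R).exists_bound_of_continuousOn hf'
  have : IsFiniteMeasure (μ.restrict (ball c R)) :=
    isFiniteMeasure_restrict.2 measure_ball_lt_top.ne
  exact .of_bound ((hf'.mono ball_subset_closedBall).aestronglyMeasurable measurableSet_ball) M
    ((ae_restrict_mem measurableSet_ball).mono fun x hx => hM x (ball_subset_closedBall hx))

theorem exists_setIntegral_ball_sub_average_sq_le {r R ρ : ℝ} (hr : 0 < r) (hrR : r < R)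
    (hRρ : R < ρ) :
    ∃ C, ∀ (s : EuclideanSpace ℝ ι → ℝ) (q : ι → ι → EuclideanSpace ℝ ι → ℝ),
      ContDiffOn ℝ 1 s (ball 0 ρ) → (∀ i j, ContDiffOn ℝ 1 (q i j) (ball 0 ρ)) →
      GradEqDivergenceOn s q (ball 0 R) →
      ∫ x in ball 0 r, (s x - ⨍ y in ball 0 r, s y) ^ 2 ≤
        C * ∑ i, ∑ j, ∫ x in ball 0 R, q i j x ^ 2 := by
  let b : ContDiffBump (0 : EuclideanSpace ℝ ι) :=
    ⟨(r + R) / 2, R, by linarith, by linarith⟩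
  have hrb : r < b.rIn := show r < (r + R) / 2 by linarith
  have hsub : cthickening ((b.rIn - r) / 2) (ball (0 : EuclideanSpace ℝ ι) r) ⊆ ball 0 b.rIn := by
    rw [cthickening_ball (by linarith) hr]
    exact closedBall_subset_ball (by linarith)
  obtain ⟨C, hC⟩ := exists_setIntegral_sub_average_sq_le (convex_ball 0 r) isBounded_ball
    measurableSet_ball (ι := ι) (half_pos (sub_pos.2 hrb))
  refine ⟨|C|, fun s q hs hq h => ?_⟩
  have hbs := (bump_mul_eqOn b s).mono (ball_subset_ball hrb.le)
  have hrel := GradEqDivergenceOn.congr isOpen_ball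
    (fun x hx => h x (ball_subset_ball b.rIn_lt_rOut.le hx)) (bump_mul_eqOn b s)
    fun i j => bump_mul_eqOn b (q i j)
  have havg : ⨍ y in ball 0 r, b y * s y = ⨍ y in ball 0 r, s y :=
    setAverage_congr_fun measurableSet_ball (.of_forall fun x hx => hbs hx)
  calc ∫ x in ball 0 r, (s x - ⨍ y in ball 0 r, s y) ^ 2
      = ∫ x in ball 0 r, (b x * s x - ⨍ y in ball 0 r, b y * s y) ^ 2 :=
        setIntegral_congr_fun measurableSet_ball fun x hx => by
          rw [havg, show b x * s x = s x from hbs hx]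
    _ ≤ C * ∑ i, ∑ j, ∫ x, (b x * q i j x) ^ 2 :=
        hC _ _ (contDiff_bump_mul b hRρ hs) b.hasCompactSupport.mul_right
          (fun i j => contDiff_bump_mul b hRρ (hq i j))
          (fun i j => b.hasCompactSupport.mul_right) fun x hx => hrel x (hsub hx)
    _ ≤ |C| * ∑ i, ∑ j, ∫ x in ball 0 R, q i j x ^ 2 := by
        gcongr with i _ j _
        · exact le_abs_self C
        · exact setIntegral_bump_mul_sq_le b
            (memLp_restrict_ball (hq i j).continuousOn hRρ 2).integrable_sq

theorem exists_average_ball_sub_sq_le_of_contDiffOn {r R ρ : ℝ} (hr : 0 < r) (hrR : r ≤ R)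
    (hRρ : R < ρ) :
    ∃ C, ∀ (s : EuclideanSpace ℝ ι → ℝ) (q : ι → ι → EuclideanSpace ℝ ι → ℝ),
      ContDiffOn ℝ 1 s (ball 0 ρ) → (∀ i j, ContDiffOn ℝ 1 (q i j) (ball 0 ρ)) →
      GradEqDivergenceOn s q (ball 0 R) →
      ((⨍ x in ball 0 R, s x) - ⨍ x in ball 0 r, s x) ^ 2 ≤
        C * ∑ i, ∑ j, ∫ x in ball 0 R, q i j x ^ 2 := by
  let b : ContDiffBump (0 : EuclideanSpace ℝ ι) :=
    ⟨R, (R + ρ) / 2, hr.trans_le hrR, by linarith⟩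
  have hb : b.rOut < ρ := show (R + ρ) / 2 < ρ by linarith
  refine (exists_average_ball_sub_sq_le (ι := ι) hr hrR).imp fun C hC s q hs hq h => ?_
  have havg (t : ℝ) (ht : t ≤ R) : ⨍ x in ball 0 t, b x * s x = ⨍ x in ball 0 t, s x :=
    setAverage_congr_fun measurableSet_ball
      (.of_forall fun x hx => bump_mul_eqOn b s (ball_subset_ball ht hx))
  have hsq (i j : ι) : ∫ x in ball 0 R, (b x * q i j x) ^ 2 = ∫ x in ball 0 R, q i j x ^ 2 :=
    setIntegral_congr_fun measurableSet_ball fun x hx =>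
      congrArg (· ^ 2) (bump_mul_eqOn b (q i j) hx)
  have hest := hC _ _ (contDiff_bump_mul b hb hs) b.hasCompactSupport.mul_right
    (fun i j => contDiff_bump_mul b hb (hq i j)) (fun i j => b.hasCompactSupport.mul_right)
    (h.congr isOpen_ball (bump_mul_eqOn b s) fun i j => bump_mul_eqOn b (q i j))
  simpa only [havg R le_rfl, havg r hrR, hsq] using hest

theorem exists_setIntegral_sub_average_concentric_sq_le {r R ρ : ℝ} (hr : 0 < r) (hrR : r < R)
    (hRρ : R < ρ) :
    ∃ C, ∀ (s : EuclideanSpace ℝ ι → ℝ) (q : ι → ι → EuclideanSpace ℝ ι → ℝ),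
      ContDiffOn ℝ 1 s (ball 0 ρ) → (∀ i j, ContDiffOn ℝ 1 (q i j) (ball 0 ρ)) →
      GradEqDivergenceOn s q (ball 0 R) →
      ∫ x in ball 0 r, (s x - ⨍ y in ball 0 R, s y) ^ 2 ≤
        C * ∑ i, ∑ j, ∫ x in ball 0 R, q i j x ^ 2 := by
  obtain ⟨C₁, hC₁⟩ := exists_setIntegral_ball_sub_average_sq_le (ι := ι) hr hrR hRρ
  obtain ⟨C₂, hC₂⟩ := exists_average_ball_sub_sq_le_of_contDiffOn (ι := ι) hr hrR.le hRρ
  refine ⟨C₁ + volume.real (ball (0 : EuclideanSpace ℝ ι) r) * C₂, fun s q hs hq h => ?_⟩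
  have : IsFiniteMeasure (volume.restrict (ball (0 : EuclideanSpace ℝ ι) r)) :=
    isFiniteMeasure_restrict.2 measure_ball_lt_top.ne
  rw [← integral_sub_average_sq_add (memLp_restrict_ball hs.continuousOn (hrR.trans hRρ) 2),
    measureReal_restrict_apply_univ, sub_sq_comm (⨍ y in ball 0 r, s y), add_mul, mul_assoc]
  gcongr
  exacts [hC₁ s q hs hq h, hC₂ s q hs hq h]

end Balls

theorem bianchi_scalar_mean_oscillation_general {ι : Type*} [Fintype ι] [DecidableEq ι]
    {r R ρ : ℝ} (hr : 0 < r) (hrR : r < R) (hRρ : R < ρ) (κ : ℝ) :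
    ∃ C : ℝ, ∀ (z : ι → ι → EuclideanSpace ℝ ι → ℝ) (s : EuclideanSpace ℝ ι → ℝ),
      (∀ i j, ContDiffOn ℝ 1 (z i j) (ball 0 ρ)) → ContDiffOn ℝ 1 s (ball 0 ρ) →
      (∀ x ∈ ball 0 R, ∀ i, fderiv ℝ s x (EuclideanSpace.single i 1) =
        κ * ∑ j, fderiv ℝ (z i j) x (EuclideanSpace.single j 1)) →
      ∫ x in ball 0 r, (s x - ⨍ y in ball 0 R, s y) ^ 2 ≤
        C * ∫ x in ball 0 R, ∑ i, ∑ j, z i j x ^ 2 := by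
  obtain ⟨C, hC⟩ := exists_setIntegral_sub_average_concentric_sq_le (ι := ι) hr hrR hRρ
  refine ⟨C * κ ^ 2, fun z s hz hs h => ?_⟩
  have hrel : GradEqDivergenceOn s (fun i j x => κ * z i j x) (ball 0 R) := fun x hx i => by
    rw [h x hx i, divergence, Finset.mul_sum]
    refine Finset.sum_congr rfl fun j _ => ?_
    have hzx : DifferentiableAt ℝ (z i j) x :=
      ((hz i j).differentiableOn one_ne_zero).differentiableAt
        (isOpen_ball.mem_nhds (ball_subset_ball hRρ.le hx))
    rw [fderiv_const_mul hzx, smul_apply, smul_eq_mul]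
  have hint (i j : ι) : IntegrableOn (fun x => z i j x ^ 2) (ball 0 R) :=
    (memLp_restrict_ball (hz i j).continuousOn hRρ 2).integrable_sq
  have hest := hC s _ hs (fun i j => contDiffOn_const.mul (hz i j)) hrel
  simp only [mul_pow, integral_const_mul, ← Finset.mul_sum, ← mul_assoc] at hest
  rwa [integral_finsetSum _ fun i _ => integrable_finsetSum _ fun j _ => hint i j,
    Finset.sum_congr rfl fun i _ => integral_finsetSum _ fun j _ => hint i j]

/-- Poincaré-type estimate from the contracted Bianchi identity: there is an
absolute constant `C` such that for any `C¹` symmetric matrix field `z` and `C¹`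
function `s` on the unit ball `B ⊂ ℝ³` satisfying `∂ᵢ s = −6·∑ⱼ ∂ⱼ z_{ij}`,
one has `∫_{B(0,1/4)} (s − s̄)² ≤ C·∫_{B(0,1/2)} |z|²`, where `s̄` is the mean of
`s` over `B(0,1/2)` and `|z|²` is the squared Frobenius norm. -/
theorem bianchi_scalar_mean_oscillation :
    ∃ C : ℝ,
      ∀ (z : Fin 3 → Fin 3 → EuclideanSpace ℝ (Fin 3) → ℝ)
        (s : EuclideanSpace ℝ (Fin 3) → ℝ),
      (∀ i j : Fin 3, ContDiffOn ℝ 1 (z i j) (ball 0 1)) →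
      ContDiffOn ℝ 1 s (ball 0 1) →
      (∀ i j : Fin 3, ∀ x ∈ ball (0 : EuclideanSpace ℝ (Fin 3)) 1,
        z i j x = z j i x) →
      (∀ x ∈ ball (0 : EuclideanSpace ℝ (Fin 3)) 1, ∀ i : Fin 3,
        fderiv ℝ s x (EuclideanSpace.single i (1 : ℝ)) =
          -6 * ∑ j : Fin 3, fderiv ℝ (z i j) x (EuclideanSpace.single j (1 : ℝ))) →
      (∫ x in ball (0 : EuclideanSpace ℝ (Fin 3)) (1 / 4),
          (s x - ⨍ y in ball (0 : EuclideanSpace ℝ (Fin 3)) (1 / 2), s y) ^ 2) ≤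
        C * ∫ x in ball (0 : EuclideanSpace ℝ (Fin 3)) (1 / 2),
          ∑ i : Fin 3, ∑ j : Fin 3, (z i j x) ^ 2 :=
  (bianchi_scalar_mean_oscillation_general (ρ := 1) (by norm_num) (by norm_num) (by norm_num)
    (-6)).imp fun _ hC z s hz hs _ h => hC z s hz hs fun x hx =>
      h x (ball_subset_ball (by norm_num) hx)
end
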